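/- arXiv:0909.4732 — 6 statements merged into one kernel-verified Lean document; each statement's English description precedes it below -/
import Mathlib

section
/- For every integer n ≥ 0, the number of descending plane partitions of order n equals ∏_{k=0}^{n−1} (3k+1)!/(n+k)!. -/
/-- A descending plane partition, encoded as a list of rows (top row first).
Row `i` (0-indexed) occupies columns `i+1, …, μ_{i+1}` (1-indexed), so the entry at
position `p` (0-indexed) of row `i` is `a_{i+1, i+1+p}`, and `μ_{i+1} = rowlength + i`. -/
def IsDPP (a : List (List ℕ)) : Prop :=
  -- rows are nonempty arrays of positive integers
  (∀ row ∈ a, row ≠ []) ∧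
  (∀ row ∈ a, ∀ x ∈ row, 0 < x) ∧
  -- (1) μ_1 ≥ μ_2 ≥ … ≥ μ_r (where μ_{i+1} = length of row i + i, 0-indexed rows)
  (∀ i, i + 1 < a.length →
    (a.getD (i + 1) []).length + (i + 1) ≤ (a.getD i []).length + i) ∧
  -- (2) rows weakly decreasing
  (∀ row ∈ a, row.Chain' (· ≥ ·)) ∧
  -- (2') columns strictly decreasing (whenever both entries are defined)
  (∀ i p, i + 1 < a.length → p < (a.getD (i + 1) []).length →
    (a.getD (i + 1) []).getD p 0 < (a.getD i []).getD (p + 1) 0) ∧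
  -- (3) each diagonal entry exceeds the number of entries in its row
  (∀ row ∈ a, row.length < row.getD 0 0) ∧
  -- (4) each diagonal entry is at most the number of entries in the row above
  (∀ i, i + 1 < a.length → (a.getD (i + 1) []).getD 0 0 ≤ (a.getD i []).length)

/-- A DPP has order `n` when all its entries are at most `n`. -/
def DPPOrder (a : List (List ℕ)) (n : ℕ) : Prop := ∀ row ∈ a, ∀ x ∈ row, x ≤ n

/-- No entry `a_{i,j}` is special, i.e. `a_{i,j} > j - i` throughout: the entry at
(0-indexed) position `p` of any row exceeds `p`. -/
def NoSpecialPart (a : List (List ℕ)) : Prop :=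
  ∀ row ∈ a, ∀ p < row.length, p < row.getD p 0

/-
Subtracting one from every entry of a column-strict shifted array replaces its row lengths by an
interlacing sequence. Determinants formed from the numbers of single rows obey the same recursion,
by column operations, so the number of such arrays with given first entries and row lengths is a
determinant of binomial coefficients.
Hence the descending plane partitions with first entries `σ i + 1` are counted by the minor
`det C(σ i + σ j, σ i + 1)`, and summing over all `σ` gives `det (1 + [C(i + j, i + 1)])`.

Let `ω` be a primitive cube root of unity. For the Möbius series `U = (1 + ω² x) / (1 + ω x)` and
`V = (1 + ω y) / (1 + ω² y)`, the polynomial `U² + U V + V² = (U³ - V³) / (U - V)` is, up to factors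
in `x` or `y` alone, the denominator of the generating function of the last matrix. That function is
therefore, up to such factors, the divided difference of `(1 + z) ^ (1 / 3)` at `U³ - 1` and
`V³ - 1`, and the matrix is a product of a Riordan matrix, the Hankel matrix of the coefficients of
`(1 + z) ^ (1 / 3)` and a transposed Riordan matrix. Explicit orthogonal polynomials, checked by
finite differences, triangularise the Hankel matrix.
-/

namespace DPP

open Finset
open scoped Nat Polynomial

section Determinants

variable {R : Type*} [CommRing R]

theorem det_one_add_eq_sum_minors {n : ℕ} (M : Matrix (Fin n) (Fin n) R) :
    (1 + M).det =
      ∑ S : Finset (Fin n), (M.submatrix (S.orderEmbOfFin rfl) (S.orderEmbOfFin rfl)).det := by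
  have expand : (1 + M).det =
      ∑ S : Finset (Fin n), (M.submatrix ((↑) : S → Fin n) ((↑) : S → Fin n)).det := by
    rw [add_comm]
    refine (AlternatingMap.map_add_univ Matrix.detRowAlternating M (1 : Matrix _ _ R)).trans ?_
    exact sum_congr rfl fun S _ ↦ Matrix.det_piecewise_one_eq_submatrix_det M S
  refine expand.trans (sum_congr rfl fun S _ ↦ ?_)
  exact (Matrix.det_submatrix_equiv_self (S.orderIsoOfFin rfl).toEquiv _).symm

theorem det_sum_columns {m ι : Type*} [Fintype m] [DecidableEq m] (g : m → ι → R)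
    (A : m → Finset ι) :
    (Matrix.of fun i j ↦ ∑ t ∈ A j, g i t).det =
      ∑ t ∈ Fintype.piFinset A, (Matrix.of fun i j ↦ g i (t j)).det := by
  have expand := (Matrix.detRowAlternating (R := R) (n := m)).toMultilinearMap.map_sum_finset
    (fun _ t i ↦ g i t) A
  rw [← Matrix.det_transpose]
  refine Eq.trans ?_ (expand.trans (sum_congr rfl fun t _ ↦ Matrix.det_transpose _))
  refine congrArg Matrix.det (Matrix.ext fun i j ↦ ?_)
  simp [Finset.sum_apply]

/-- The sequences `t` with `t 0 ≤ b 0 < t 1 ≤ b 1 < t 2 ≤ ⋯`. -/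
def interlacing {k : ℕ} (b : Fin k → ℕ) : Finset (Fin k → ℕ) :=
  {t ∈ Iic b | ∀ i j : Fin k, (i : ℕ) + 1 = j → b i < t j}

theorem mem_interlacing {k : ℕ} {b t : Fin k → ℕ} :
    t ∈ interlacing b ↔ t ≤ b ∧ ∀ i j : Fin k, (i : ℕ) + 1 = j → b i < t j := by
  simp [interlacing]

theorem strictMono_of_mem_interlacing {k : ℕ} {b t : Fin k → ℕ} (ht : t ∈ interlacing b) :
    StrictMono t := by
  obtain ⟨hle, hlt⟩ := mem_interlacing.1 ht
  cases k with
  | zero => exact Subsingleton.strictMono t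
  | succ k => exact Fin.strictMono_iff_lt_succ.2 fun i ↦ (hle _).trans_lt (hlt _ _ (by simp))

theorem interlacing_succ {k : ℕ} (b : Fin (k + 1) → ℕ) :
    interlacing b = Icc (Fin.cons 0 fun i ↦ b i.castSucc + 1) b := by
  ext t
  have cons_le : (Fin.cons 0 fun i ↦ b i.castSucc + 1) ≤ t ↔ ∀ i : Fin k, b i.castSucc < t i.succ :=
    Fin.forall_fin_succ.trans (and_iff_right (Nat.zero_le _))
  rw [mem_interlacing, mem_Icc, and_comm, cons_le]
  refine and_congr_left' ⟨fun h i ↦ h _ _ (by simp), fun h i j hij ↦ ?_⟩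
  cases j using Fin.cases with
  | zero => simp at hij
  | succ j =>
    obtain rfl : i = j.castSucc := Fin.ext (by simpa using hij)
    exact h j

theorem det_sum_Iic_eq_sum_interlacing {k : ℕ} {b : Fin k → ℕ} (hb : StrictMono b)
    (g : Fin k → ℕ → R) :
    (Matrix.of fun i j ↦ ∑ t ∈ Iic (b j), g i t).det =
      ∑ t ∈ interlacing b, (Matrix.of fun i j ↦ g i (t j)).det := by
  rcases k with _ | k
  · rw [show interlacing b = univ from eq_univ_of_forall fun t ↦ by simp [mem_interlacing,
      Subsingleton.elim t b]]
    simp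
  rw [interlacing_succ, Pi.Icc_eq, ← det_sum_columns]
  refine Matrix.det_eq_of_forall_col_eq_smul_add_pred (fun _ ↦ 1) (fun i ↦ rfl) fun i j ↦ ?_
  have hlt : b j.castSucc < b j.succ := hb Fin.castSucc_lt_succ
  have union : Iic (b j.succ) = Iic (b j.castSucc) ∪ Icc (b j.castSucc + 1) (b j.succ) := by
    ext; simp; omega
  have disj : Disjoint (Iic (b j.castSucc)) (Icc (b j.castSucc + 1) (b j.succ)) :=
    disjoint_left.2 fun x ↦ by simp; omega
  simp [union, sum_union disj, add_comm]

end Determinants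

section Arrays

/-- `f` lists the entries of a weakly decreasing row of `t` positive integers with first entry `s`,
followed by zeros. -/
structure IsPaddedRow (f : ℕ → ℕ) (s t : ℕ) : Prop where
  antitone : Antitone f
  head : f 0 = s
  eq_zero_iff (p : ℕ) : f p = 0 ↔ t ≤ p

namespace IsPaddedRow

variable {f : ℕ → ℕ} {s t t' : ℕ}

theorem pos_iff (hf : IsPaddedRow f s t) (p : ℕ) : 0 < f p ↔ p < t := by
  rw [Nat.pos_iff_ne_zero, Ne, hf.eq_zero_iff, not_le]

theorem head_eq_zero_iff (hf : IsPaddedRow f s t) : s = 0 ↔ t = 0 := by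
  rw [← hf.head, hf.eq_zero_iff, Nat.le_zero]

theorem length_unique (hf : IsPaddedRow f s t) (hf' : IsPaddedRow f s t') : t = t' :=
  le_antisymm ((hf.eq_zero_iff t').1 ((hf'.eq_zero_iff t').2 le_rfl))
    ((hf'.eq_zero_iff t).1 ((hf.eq_zero_iff t).2 le_rfl))

theorem zero : IsPaddedRow 0 0 0 := ⟨antitone_const, rfl, by simp⟩

end IsPaddedRow

theorem finite_setOf_isPaddedRow (s t : ℕ) : {f | IsPaddedRow f s t}.Finite := by
  refine (Set.finite_range fun (g : Fin t → Fin (s + 1)) p ↦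
    if h : p < t then (g ⟨p, h⟩ : ℕ) else 0).subset fun f hf ↦ ?_
  have le_head (p : ℕ) : f p < s + 1 := Nat.lt_succ_of_le ((hf.antitone p.zero_le).trans_eq hf.head)
  refine ⟨fun p ↦ ⟨f p, le_head p⟩, funext fun p ↦ ?_⟩
  by_cases hp : p < t
  · simp [hp]
  · simpa [hp] using ((hf.eq_zero_iff p).2 (not_lt.1 hp)).symm

/-- Column-strict shifted arrays whose rows, indexed from bottom to top, have first entries `s` and
lengths `t`; row `i + 1` starts one column to the left of row `i`. -/
def shiftedArrays {k : ℕ} (s t : Fin k → ℕ) : Set (Fin k → ℕ → ℕ) :=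
  {a | (∀ i, IsPaddedRow (a i) (s i) (t i)) ∧
    ∀ i j : Fin k, (i : ℕ) + 1 = j → ∀ p < t i, a i p < a j (p + 1)}

theorem finite_shiftedArrays {k : ℕ} (s t : Fin k → ℕ) : (shiftedArrays s t).Finite :=
  (Set.Finite.pi' fun i ↦ finite_setOf_isPaddedRow (s i) (t i)).subset fun _ ha ↦ ha.1

theorem ncard_biUnion_shiftedArrays {k : ℕ} (s : Fin k → ℕ) (T : Finset (Fin k → ℕ)) :
    (⋃ t ∈ T, shiftedArrays s t).ncard = ∑ t ∈ T, (shiftedArrays s t).ncard := by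
  have disjoint : (T : Set (Fin k → ℕ)).PairwiseDisjoint (shiftedArrays s) :=
    fun t _ t' _ hne ↦ Set.disjoint_left.2 fun a ha ha' ↦
      hne (funext fun i ↦ (ha.1 i).length_unique (ha'.1 i))
  have finite : ∀ t ∈ (T : Set (Fin k → ℕ)), (shiftedArrays s t).Finite :=
    fun t _ ↦ finite_shiftedArrays s t
  exact (T.finite_toSet.ncard_biUnion finite disjoint).trans (finsum_mem_coe_finset _ _)

/-- Adds one to the first `t` values of `f` and replaces all others by zero. -/
def addOneBelow (t : ℕ) (f : ℕ → ℕ) (p : ℕ) : ℕ :=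
  if p < t then f p + 1 else 0

theorem addOneBelow_of_lt {t p : ℕ} (f : ℕ → ℕ) (hp : p < t) : addOneBelow t f p = f p + 1 :=
  if_pos hp

namespace IsPaddedRow

variable {f : ℕ → ℕ} {s t t' : ℕ}

theorem addOneBelow (hf : IsPaddedRow f s t') (ht' : t' ≤ t) (hst : 0 < s ∨ 0 < t) :
    IsPaddedRow (addOneBelow t f) (s + 1) t where
  antitone p q hpq := by
    have := hf.antitone hpq
    simp only [DPP.addOneBelow]
    split_ifs <;> omega
  head := by
    have := hf.head_eq_zero_iff
    rw [addOneBelow_of_lt f (by omega), hf.head]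
  eq_zero_iff p := by simp [DPP.addOneBelow]

theorem addOneBelow_sub_one (hf : IsPaddedRow f s t) : DPP.addOneBelow t (fun p ↦ f p - 1) = f := by
  funext p
  have := hf.eq_zero_iff p
  simp only [DPP.addOneBelow]
  split_ifs <;> omega

theorem sub_one_addOneBelow (hf : IsPaddedRow f s t') (ht : t' ≤ t) :
    (fun p ↦ DPP.addOneBelow t f p - 1) = f := by
  funext p
  have := hf.eq_zero_iff p
  simp only [DPP.addOneBelow]
  split_ifs <;> omega

theorem exists_sub_one (hf : IsPaddedRow f (s + 1) t) :
    ∃ t' ≤ t, IsPaddedRow (fun p ↦ f p - 1) s t' := by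
  have vanishes : ∃ p, f p - 1 = 0 := ⟨t, by rw [(hf.eq_zero_iff t).2 le_rfl]⟩
  have antitone : Antitone fun p ↦ f p - 1 := fun p q hpq ↦ Nat.sub_le_sub_right (hf.antitone hpq) 1
  refine ⟨Nat.find vanishes, Nat.find_min' _ (by rw [(hf.eq_zero_iff t).2 le_rfl]), antitone,
    by rw [hf.head, Nat.add_sub_cancel], fun p ↦ ⟨Nat.find_min' vanishes, fun hp ↦ ?_⟩⟩
  exact Nat.eq_zero_of_le_zero ((antitone hp).trans_eq (Nat.find_spec vanishes))

end IsPaddedRow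

theorem addOneBelow_mem_shiftedArrays {k : ℕ} {s t t' : Fin k → ℕ} {a : Fin k → ℕ → ℕ}
    (hst : ∀ i, 0 < s i ∨ 0 < t i) (ht' : t' ∈ interlacing t) (ha : a ∈ shiftedArrays s t') :
    (fun i ↦ addOneBelow (t i) (a i)) ∈ shiftedArrays (fun i ↦ s i + 1) t := by
  obtain ⟨le, lt⟩ := mem_interlacing.1 ht'
  refine ⟨fun i ↦ (ha.1 i).addOneBelow (le i) (hst i), fun i j hij p hp ↦ ?_⟩
  have hpj : p + 1 < t' j := (Nat.succ_le_of_lt hp).trans_lt (lt i j hij)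
  simp only [addOneBelow_of_lt _ hp, addOneBelow_of_lt _ (hpj.trans_le (le j)),
    add_lt_add_iff_right]
  rcases lt_or_ge p (t' i) with hpi | hpi
  · exact ha.2 i j hij p hpi
  · rw [((ha.1 i).eq_zero_iff p).2 hpi]
    exact ((ha.1 j).pos_iff _).2 hpj

theorem exists_sub_one_mem_shiftedArrays {k : ℕ} {s t : Fin k → ℕ} {a : Fin k → ℕ → ℕ}
    (ha : a ∈ shiftedArrays (fun i ↦ s i + 1) t) :
    ∃ t' ∈ interlacing t, (fun i p ↦ a i p - 1) ∈ shiftedArrays s t' := by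
  obtain ⟨row, col⟩ := ha
  choose t' le row' using fun i ↦ (row i).exists_sub_one
  refine ⟨t', mem_interlacing.2 ⟨le, fun i j hij ↦ ?_⟩, row', fun i j hij p hp ↦ ?_⟩
  · have pos : 0 < t i := ((row i).pos_iff 0).1 (by simp [(row i).head])
    have last_pos := ((row i).pos_iff (t i - 1)).2 (by omega)
    have above := col i j hij (t i - 1) (by omega)
    rw [Nat.sub_add_cancel pos] at above
    exact ((row' j).pos_iff (t i)).1 (by omega)
  · have := col i j hij p (hp.trans_le (le i))
    have := ((row' i).pos_iff p).2 hp
    grind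

theorem ncard_shiftedArrays_add_one {k : ℕ} {s t : Fin k → ℕ}
    (hst : ∀ i, 0 < s i ∨ 0 < t i) :
    (shiftedArrays (fun i ↦ s i + 1) t).ncard =
      (⋃ t' ∈ interlacing t, shiftedArrays s t').ncard := by
  refine Set.ncard_congr' ?_
  refine ⟨fun a ↦ ⟨fun i p ↦ a.1 i p - 1, ?_⟩,
    fun a ↦ ⟨fun i ↦ addOneBelow (t i) (a.1 i), ?_⟩, fun a ↦ ?_, fun a ↦ ?_⟩
  · simpa only [Set.mem_iUnion₂, exists_prop] using exists_sub_one_mem_shiftedArrays a.2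
  · obtain ⟨t', ht', ha⟩ := Set.mem_iUnion₂.1 a.2
    exact addOneBelow_mem_shiftedArrays hst ht' ha
  · exact Subtype.ext (funext fun i ↦ (a.2.1 i).addOneBelow_sub_one)
  · obtain ⟨t', ht', ha⟩ := Set.mem_iUnion₂.1 a.2
    exact Subtype.ext (funext fun i ↦ (ha.1 i).sub_one_addOneBelow ((mem_interlacing.1 ht').1 i))

/-- The number of rows of `t` positive integers with first entry `s` and weakly decreasing
entries. -/
def rowCount : ℕ → ℕ → ℕ
  | 0, 0 => 1
  | s + 1, t + 1 => (s + 1).multichoose t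
  | _, _ => 0

theorem rowCount_zero_eq_ite (t : ℕ) : rowCount 0 t = if t = 0 then 1 else 0 := by
  cases t <;> rfl

theorem rowCount_succ_zero (s : ℕ) : rowCount (s + 1) 0 = 0 := rfl

theorem rowCount_succ_succ (s t : ℕ) :
    rowCount (s + 1) (t + 1) = ∑ t' ∈ Iic (t + 1), rowCount s t' := by
  change _ = ∑ t' ∈ Icc 0 (t + 1), rowCount s t'
  rw [← Nat.range_succ_eq_Icc_zero, sum_range_succ']
  cases s with
  | zero => simp [rowCount]
  | succ s =>
    simp only [rowCount, add_zero]
    rw [Nat.sum_range_multichoose, Nat.multichoose_eq,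
      show s + 1 + 1 + t - 1 = s + 1 + t by omega, ← Nat.choose_symm_add, add_comm t]

theorem shiftedArrays_eq_empty {k : ℕ} {s t : Fin k → ℕ} {i : Fin k} (h : ¬(s i = 0 ↔ t i = 0)) :
    shiftedArrays s t = ∅ :=
  Set.eq_empty_of_forall_notMem fun _ ha ↦ h (ha.1 i).head_eq_zero_iff

theorem cons_zero_mem_shiftedArrays {k : ℕ} {s t : Fin (k + 1) → ℕ} {a : Fin k → ℕ → ℕ}
    (hs : s 0 = 0) (ht : t 0 = 0) (ha : a ∈ shiftedArrays (Fin.tail s) (Fin.tail t)) :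
    (Fin.cons 0 a : Fin (k + 1) → ℕ → ℕ) ∈ shiftedArrays s t := by
  refine ⟨Fin.cases (by simpa [hs, ht] using .zero) ha.1, fun i j hij p hp ↦ ?_⟩
  cases i using Fin.cases with
  | zero => simp [ht] at hp
  | succ i =>
    cases j using Fin.cases with
    | zero => simp at hij
    | succ j => exact ha.2 i j (by simpa using hij) p hp

theorem ncard_shiftedArrays_of_zero {k : ℕ} {s t : Fin (k + 1) → ℕ} (hs : s 0 = 0) (ht : t 0 = 0) :
    (shiftedArrays s t).ncard = (shiftedArrays (Fin.tail s) (Fin.tail t)).ncard := by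
  refine Set.ncard_congr' ⟨fun a ↦ ⟨Fin.tail a.1, ?_⟩, fun a ↦ ⟨Fin.cons 0 a.1, ?_⟩, ?_, ?_⟩
  · exact ⟨fun i ↦ a.2.1 i.succ, fun i j hij ↦ a.2.2 i.succ j.succ (by simpa using hij)⟩
  · exact cons_zero_mem_shiftedArrays hs ht a.2
  · have bottom_zero (a : shiftedArrays s t) : 0 = a.1 0 :=
      funext fun p ↦ (((a.2.1 0).eq_zero_iff p).2 (by simp [ht])).symm
    exact fun a ↦ Subtype.ext <|
      (congrArg (Fin.cons · (Fin.tail a.1)) (bottom_zero a)).trans (Fin.cons_self_tail a.1)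
  · exact fun a ↦ Subtype.ext (Fin.tail_cons (α := fun _ ↦ ℕ → ℕ) 0 a.1)

section RowCountDeterminants

variable (R : Type*) [CommRing R]

theorem det_rowCount_add_one {k : ℕ} (s : Fin k → ℕ) {t : Fin k → ℕ} (ht : StrictMono t)
    (ht_pos : ∀ i, 0 < t i) :
    (Matrix.of fun i j ↦ (rowCount (s i + 1) (t j) : R)).det =
      ∑ t' ∈ interlacing t, (Matrix.of fun i j ↦ (rowCount (s i) (t' j) : R)).det := by
  rw [← det_sum_Iic_eq_sum_interlacing ht fun i t' ↦ (rowCount (s i) t' : R)]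
  refine congrArg Matrix.det (Matrix.ext fun i j ↦ ?_)
  obtain ⟨u, hu⟩ := Nat.exists_eq_succ_of_ne_zero (ht_pos j).ne'
  simp only [Matrix.of_apply, hu, Nat.succ_eq_add_one, rowCount_succ_succ, Nat.cast_sum]

theorem det_rowCount_of_zero {k : ℕ} {s t : Fin (k + 1) → ℕ} (hs : s 0 = 0) (ht : t 0 = 0)
    (ht_pos : ∀ i : Fin k, t i.succ ≠ 0) :
    (Matrix.of fun i j ↦ (rowCount (s i) (t j) : R)).det =
      (Matrix.of fun i j ↦ (rowCount (Fin.tail s i) (Fin.tail t j) : R)).det := by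
  rw [Matrix.det_succ_row_zero, Fin.sum_univ_succ, sum_eq_zero]
  · simp [hs, ht, rowCount_zero_eq_ite, Fin.tail, Matrix.submatrix]
  · simp [hs, ht_pos, rowCount_zero_eq_ite]

theorem ncard_shiftedArrays_eq_det {k : ℕ} {s t : Fin k → ℕ} (hs : StrictMono s)
    (ht : StrictMono t) :
    ((shiftedArrays s t).ncard : R) = (Matrix.of fun i j ↦ (rowCount (s i) (t j) : R)).det := by
  induction k with
  | zero => simp [shiftedArrays]
  | succ k ih =>
    have pos_of_zero {u : Fin (k + 1) → ℕ} (hu : StrictMono u) (h0 : 0 < u 0) (i : Fin (k + 1)) :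
        0 < u i := h0.trans_le (hu.monotone i.zero_le)
    generalize hm : s 0 = m
    induction m generalizing s t with
    | zero =>
      by_cases ht0 : t 0 = 0
      · rw [ncard_shiftedArrays_of_zero hm ht0,
          det_rowCount_of_zero R hm ht0 fun i ↦ (ht0.symm.trans_lt (ht i.succ_pos)).ne']
        exact ih (hs.comp Fin.strictMono_succ) (ht.comp Fin.strictMono_succ)
      · rw [shiftedArrays_eq_empty (i := 0) (by simp [hm, ht0]), Set.ncard_empty, Nat.cast_zero,
          Matrix.det_eq_zero_of_row_eq_zero 0]
        intro j
        simp [hm, rowCount_zero_eq_ite, (pos_of_zero ht (Nat.pos_of_ne_zero ht0) j).ne']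
    | succ m ih' =>
      obtain ⟨s, rfl⟩ : ∃ s' : Fin (k + 1) → ℕ, s = fun i ↦ s' i + 1 :=
        ⟨fun i ↦ s i - 1, funext fun i ↦ (Nat.sub_add_cancel (pos_of_zero hs (by omega) i)).symm⟩
      by_cases ht0 : t 0 = 0
      · rw [shiftedArrays_eq_empty (i := 0) (by simp [ht0]), Set.ncard_empty, Nat.cast_zero,
          Matrix.det_eq_zero_of_column_eq_zero 0]
        simp [ht0, rowCount_succ_zero]
      · have ht_pos := pos_of_zero ht (Nat.pos_of_ne_zero ht0)
        rw [ncard_shiftedArrays_add_one fun i ↦ .inr (ht_pos i), ncard_biUnion_shiftedArrays,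
          det_rowCount_add_one R s ht ht_pos, Nat.cast_sum]
        refine sum_congr rfl fun t' ht' ↦
          ih' (fun i j hij ↦ ?_) (strictMono_of_mem_interlacing ht') (Nat.succ_injective hm)
        exact Nat.lt_of_succ_lt_succ (hs hij)

end RowCountDeterminants

end Arrays

section Lists

/-- The conditions that a descending plane partition imposes on each of its rows. -/
structure IsDPPRow (r : List ℕ) : Prop where
  pos (x : ℕ) : x ∈ r → 0 < x
  isChain : r.IsChain (· ≥ ·)
  length_lt_head : r.length < r.getD 0 0

/-- The conditions under which the row `r` of a descending plane partition may stand immediately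
above the row `r'`, which is shifted one column to the right. -/
structure IsAbove (r r' : List ℕ) : Prop where
  lt (p : ℕ) : p < r'.length → r'.getD p 0 < r.getD (p + 1) 0
  head_le_length : r'.getD 0 0 ≤ r.length

theorem isDPP_iff {a : List (List ℕ)} :
    IsDPP a ↔ (∀ r ∈ a, IsDPPRow r) ∧ a.IsChain IsAbove := by
  rw [List.isChain_iff_getElem]
  constructor
  · rintro ⟨-, pos, -, chain, lt, length_lt, head_le⟩
    refine ⟨fun r hr ↦ ⟨pos r hr, chain r hr, length_lt r hr⟩, fun i hi ↦ ?_⟩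
    have lt := lt i
    have head_le := head_le i hi
    simp only [List.getD_eq_getElem _ _ hi, List.getD_eq_getElem _ _ (Nat.lt_of_succ_lt hi)]
      at lt head_le
    exact ⟨fun p ↦ lt p hi, head_le⟩
  · rintro ⟨row, above⟩
    refine ⟨fun r hr hnil ↦ ?_, fun r hr ↦ (row r hr).pos, fun i hi ↦ ?_,
      fun r hr ↦ (row r hr).isChain, fun i p hi ↦ ?_, fun r hr ↦ (row r hr).length_lt_head,
      fun i hi ↦ ?_⟩
    · simpa [hnil] using (row r hr).length_lt_head
    all_goals
      simp only [List.getD_eq_getElem _ _ hi, List.getD_eq_getElem _ _ (Nat.lt_of_succ_lt hi)]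
    · have := (row _ (a.getElem_mem hi)).length_lt_head
      have := (above i hi).head_le_length
      omega
    · exact (above i hi).lt p
    · exact (above i hi).head_le_length

theorem isDPP_reverse_ofFn_iff {k : ℕ} {r : Fin k → List ℕ} :
    IsDPP (List.ofFn r).reverse ↔
      (∀ i, IsDPPRow (r i)) ∧ ∀ i j : Fin k, (i : ℕ) + 1 = j → IsAbove (r j) (r i) := by
  rw [isDPP_iff, List.isChain_reverse, List.isChain_ofFn]
  refine and_congr (by simp) ⟨fun h i j hij ↦ ?_, fun h i hi ↦ ?_⟩
  · have := h i (by omega)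
    convert this
    exact hij.symm
  · exact h _ _ rfl

theorem IsDPPRow.isPaddedRow {r : List ℕ} {s : ℕ} (hr : IsDPPRow r) (hs : r.getD 0 0 = s) :
    IsPaddedRow (r.getD · 0) s r.length where
  antitone p q hpq := by
    rcases lt_or_ge q r.length with hq | hq
    · simp only [List.getD_eq_getElem _ _ hq, List.getD_eq_getElem _ _ (hpq.trans_lt hq)]
      exact (List.isChain_iff_pairwise.1 hr.isChain).rel_get_of_le (a := ⟨p, _⟩) (b := ⟨q, _⟩) hpq
    · exact (List.getD_eq_default _ _ hq).trans_le (Nat.zero_le _)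
  head := hs
  eq_zero_iff p := by
    rcases lt_or_ge p r.length with hp | hp
    · simp only [List.getD_eq_getElem _ _ hp]
      have := hr.pos _ (r.getElem_mem hp)
      omega
    · simp [hp]

theorem IsPaddedRow.getD_ofFn {f : ℕ → ℕ} {s t : ℕ} (hf : IsPaddedRow f s t) (p : ℕ) :
    (List.ofFn fun q : Fin t ↦ f q).getD p 0 = f p := by
  rcases lt_or_ge p t with hp | hp
  · simp [hp]
  · rw [List.getD_eq_default _ _ (by simpa), (hf.eq_zero_iff p).2 hp]

theorem IsPaddedRow.isDPPRow_ofFn {f : ℕ → ℕ} {s t : ℕ} (hf : IsPaddedRow f s t) (ht : t < s) :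
    IsDPPRow (List.ofFn fun p : Fin t ↦ f p) where
  pos := by simp [hf.pos_iff]
  isChain := List.isChain_ofFn.2 fun p _ ↦ hf.antitone p.le_succ
  length_lt_head := by rwa [hf.getD_ofFn, hf.head, List.length_ofFn]

theorem IsDPPRow.ext_getD {r r' : List ℕ} (hr : IsDPPRow r) (hr' : IsDPPRow r')
    (h : (r.getD · 0) = (r'.getD · 0)) : r = r' := by
  have length_eq := (hr.isPaddedRow (congrFun h 0)).length_unique (h ▸ hr'.isPaddedRow rfl)
  refine List.ext_getElem length_eq fun p hp hp' ↦ ?_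
  simpa only [List.getD_eq_getElem, hp, hp'] using congrFun h p

/-- The descending plane partitions, as families of rows indexed from bottom to top, in which row
`i` has first entry `σ i + 1`. -/
def dppRows {k : ℕ} (σ : Fin k → ℕ) : Set (Fin k → List ℕ) :=
  {r | IsDPP (List.ofFn r).reverse ∧ ∀ i, (r i).getD 0 0 = σ i + 1}

theorem image_getD_dppRows {k : ℕ} (σ : Fin k → ℕ) :
    (fun r i p ↦ (r i).getD p 0) '' dppRows σ =
      ⋃ t ∈ interlacing σ, shiftedArrays (fun i ↦ σ i + 1) t := by
  ext a
  simp only [dppRows, isDPP_reverse_ofFn_iff, Set.mem_image, Set.mem_ofPred_eq, Set.mem_iUnion₂,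
    exists_prop, mem_interlacing]
  constructor
  · rintro ⟨r, ⟨⟨row, above⟩, head⟩, rfl⟩
    refine ⟨fun i ↦ (r i).length, ⟨fun i ↦ ?_, fun i j hij ↦ ?_⟩,
      fun i ↦ (row i).isPaddedRow (head i), fun i j hij ↦ (above i j hij).lt⟩
    · exact Nat.le_of_lt_succ ((row i).length_lt_head.trans_eq (head i))
    · exact (head i).symm.trans_le (above i j hij).head_le_length
  · rintro ⟨t, ⟨le, lt⟩, row, col⟩
    refine ⟨fun i ↦ List.ofFn fun p : Fin (t i) ↦ a i p,
      ⟨⟨fun i ↦ (row i).isDPPRow_ofFn (Nat.lt_succ_of_le (le i)), fun i j hij ↦ ⟨?_, ?_⟩⟩, ?_⟩, ?_⟩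
    · simpa only [List.length_ofFn, (row _).getD_ofFn] using col i j hij
    · simpa only [List.length_ofFn, (row _).getD_ofFn, (row i).head]
        using Nat.succ_le_of_lt (lt i j hij)
    · exact fun i ↦ ((row i).getD_ofFn 0).trans (row i).head
    · exact funext fun i ↦ funext fun p ↦ (row i).getD_ofFn p

theorem injOn_getD_dppRows {k : ℕ} (σ : Fin k → ℕ) :
    Set.InjOn (fun r i p ↦ (r i).getD p 0) (dppRows σ) := fun _ hr _ hr' h ↦
  funext fun i ↦ ((isDPP_reverse_ofFn_iff.1 hr.1).1 i).ext_getD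
    ((isDPP_reverse_ofFn_iff.1 hr'.1).1 i) (congrFun h i)

theorem finite_dppRows {k : ℕ} (σ : Fin k → ℕ) : (dppRows σ).Finite := by
  refine Set.Finite.of_finite_image ?_ (injOn_getD_dppRows σ)
  rw [image_getD_dppRows]
  exact (interlacing σ).finite_toSet.biUnion fun t _ ↦ finite_shiftedArrays _ t

theorem rowCount_add_two (s t : ℕ) : rowCount (s + 2) t = (s + t).choose (s + 1) := by
  cases t with
  | zero => simp [rowCount]
  | succ t =>
    rw [rowCount, Nat.multichoose_eq, show s + 1 + 1 + t - 1 = s + 1 + t by omega,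
      ← Nat.choose_symm_add, show s + (t + 1) = s + 1 + t by omega]

-- The conditions relating first entries to row lengths say exactly that the lengths interlace with
-- `σ`, so adding one to all entries gives the arrays whose row lengths are equal to `σ`.
theorem ncard_dppRows_eq_det (R : Type*) [CommRing R] {k : ℕ} {σ : Fin k → ℕ} (hσ : StrictMono σ) :
    ((dppRows σ).ncard : R) =
      (Matrix.of fun i j ↦ ((σ i + σ j).choose (σ i + 1) : R)).det := by
  rw [← (injOn_getD_dppRows σ).ncard_image, image_getD_dppRows,
    ← ncard_shiftedArrays_add_one fun i ↦ .inl (σ i).succ_pos,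
    ncard_shiftedArrays_eq_det R (fun i j hij ↦ by simpa using hσ hij) hσ]
  simp only [rowCount_add_two]

/-- The descending plane partitions in which the rows from bottom to top have first entries
`σ 0 + 1, σ 1 + 1, …`. -/
def dppWithHeads {k : ℕ} (σ : Fin k → ℕ) : Set (List (List ℕ)) :=
  {a | IsDPP a ∧ a.reverse.map (·.getD 0 0) = List.ofFn fun i ↦ σ i + 1}

theorem image_reverse_ofFn_dppRows {k : ℕ} (σ : Fin k → ℕ) :
    (fun r ↦ (List.ofFn r).reverse) '' dppRows σ = dppWithHeads σ := by
  ext a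
  constructor
  · rintro ⟨r, ⟨hr, head⟩, rfl⟩
    refine ⟨hr, ?_⟩
    simp only [List.reverse_reverse, List.map_ofFn]
    exact congrArg List.ofFn (funext head)
  · rintro ⟨ha, heads⟩
    obtain rfl : a.reverse.length = k := by simpa using congrArg List.length heads
    have ofFn_get : (List.ofFn a.reverse.get).reverse = a := by
      rw [List.ofFn_get, List.reverse_reverse]
    refine ⟨a.reverse.get, ⟨ofFn_get.symm ▸ ha, congrFun (List.ofFn_injective ?_)⟩, ofFn_get⟩
    rw [← heads, ← Function.comp_def (·.getD 0 0) a.reverse.get, ← List.map_ofFn, List.ofFn_get]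

theorem reverse_ofFn_injective (k : ℕ) :
    Function.Injective fun r : Fin k → List ℕ ↦ (List.ofFn r).reverse :=
  List.reverse_injective.comp List.ofFn_injective

theorem ncard_dppWithHeads {k : ℕ} (σ : Fin k → ℕ) :
    (dppWithHeads σ).ncard = (dppRows σ).ncard := by
  rw [← image_reverse_ofFn_dppRows, Set.ncard_image_of_injective _ (reverse_ofFn_injective k)]

theorem finite_dppWithHeads {k : ℕ} (σ : Fin k → ℕ) : (dppWithHeads σ).Finite :=
  image_reverse_ofFn_dppRows σ ▸ (finite_dppRows σ).image _

theorem sortedLT_heads {a : List (List ℕ)} (ha : IsDPP a) :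
    (a.reverse.map (·.getD 0 0)).SortedLT := by
  obtain ⟨row, above⟩ := isDPP_iff.1 ha
  rw [List.sortedLT_iff_isChain, List.map_reverse, List.isChain_reverse, List.isChain_map,
    List.isChain_iff_getElem]
  intro i hi
  exact ((List.isChain_iff_getElem.1 above i hi).head_le_length).trans_lt
    (row _ (a.getElem_mem _)).length_lt_head

theorem dppOrder_iff {a : List (List ℕ)} (ha : IsDPP a) {n : ℕ} :
    DPPOrder a n ↔ ∀ r ∈ a, r.getD 0 0 ≤ n := by
  refine forall₂_congr fun r hr ↦ ?_
  have row := (isDPP_iff.1 ha).1 r hr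
  constructor
  · intro le
    cases r with
    | nil => exact n.zero_le
    | cons x r => exact le x List.mem_cons_self
  · intro le x hx
    obtain ⟨p, hp, rfl⟩ := List.getElem_of_mem hx
    rw [← List.getD_eq_getElem r 0 hp]
    exact ((row.isPaddedRow rfl).antitone p.zero_le).trans le

theorem mem_ofFn_orderEmbOfFin {n : ℕ} {S : Finset (Fin n)} {x : ℕ} :
    (x ∈ List.ofFn fun i ↦ (S.orderEmbOfFin rfl i : ℕ) + 1) ↔ ∃ j ∈ S, (j : ℕ) + 1 = x := by
  have range := S.range_orderEmbOfFin rfl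
  simp only [List.mem_ofFn, ← mem_coe, ← range, Set.exists_range_iff]

theorem setOf_isDPP_eq_iUnion (n : ℕ) :
    {a | IsDPP a ∧ DPPOrder a n} =
      ⋃ S : Finset (Fin n), dppWithHeads fun i ↦ (S.orderEmbOfFin rfl i : ℕ) := by
  ext a
  simp only [Set.mem_ofPred_eq, Set.mem_iUnion, dppWithHeads, exists_and_left]
  refine and_congr_right fun ha ↦ ⟨fun order ↦ ?_, fun ⟨S, heads⟩ ↦ ?_⟩
  · rw [dppOrder_iff ha] at order
    let S : Finset (Fin n) := {j | (j : ℕ) + 1 ∈ a.reverse.map (·.getD 0 0)}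
    refine ⟨S, (sortedLT_heads ha).eq_of_mem_iff
      (StrictMono.sortedLT_ofFn fun i j hij ↦ by simpa using hij) fun x ↦ ?_⟩
    rw [mem_ofFn_orderEmbOfFin]
    refine ⟨fun hx ↦ ?_, ?_⟩
    · obtain ⟨r, hr, rfl⟩ := List.mem_map.1 hx
      have pos := (Nat.zero_le _).trans_lt ((isDPP_iff.1 ha).1 r (by simpa using hr)).length_lt_head
      have le := order r (by simpa using hr)
      exact ⟨⟨r.getD 0 0 - 1, by omega⟩, mem_filter.2 ⟨mem_univ _, by rwa [Nat.sub_add_cancel pos]⟩,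
        Nat.sub_add_cancel pos⟩
    · rintro ⟨j, hj, rfl⟩
      exact (mem_filter.1 hj).2
  · refine (dppOrder_iff ha).2 fun r hr ↦ ?_
    have mem_heads : r.getD 0 0 ∈ a.reverse.map (·.getD 0 0) :=
      List.mem_map_of_mem (List.mem_reverse.2 hr)
    obtain ⟨j, -, hj⟩ := mem_ofFn_orderEmbOfFin.1 (heads ▸ mem_heads)
    exact hj ▸ j.isLt

theorem pairwise_disjoint_dppWithHeads (n : ℕ) :
    Pairwise (Function.onFun Disjoint fun S : Finset (Fin n) ↦
      dppWithHeads fun i ↦ (S.orderEmbOfFin rfl i : ℕ)) := by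
  refine fun S S' hne ↦ Set.disjoint_left.2 fun a ha ha' ↦ hne (Finset.ext fun j ↦ ?_)
  have mem_iff (T : Finset (Fin n)) :
      j ∈ T ↔ (j : ℕ) + 1 ∈ List.ofFn fun i ↦ (T.orderEmbOfFin rfl i : ℕ) + 1 := by
    simp [mem_ofFn_orderEmbOfFin, Fin.val_inj]
  rw [mem_iff, mem_iff, ← ha.2, ← ha'.2]

theorem ncard_isDPP_eq_det (R : Type*) [CommRing R] (n : ℕ) :
    ({a | IsDPP a ∧ DPPOrder a n}.ncard : R) =
      (1 + Matrix.of fun i j : Fin n ↦ (((i : ℕ) + j).choose (i + 1) : R)).det := by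
  rw [setOf_isDPP_eq_iUnion, Set.ncard_iUnion_of_finite (fun _ ↦ finite_dppWithHeads _)
    (pairwise_disjoint_dppWithHeads n), finsum_eq_sum_of_fintype, Nat.cast_sum,
    det_one_add_eq_sum_minors]
  refine sum_congr rfl fun S _ ↦ ?_
  rw [ncard_dppWithHeads, ncard_dppRows_eq_det R fun i j hij ↦ by simpa using hij]
  rfl

end Lists

section FiniteDifferences

variable {R K : Type*} [CommRing R] [Field K]

theorem sum_neg_one_pow_mul_choose_mul (f : R → R) (n : ℕ) (x : R) :
    ∑ j ∈ range (n + 1), (-1) ^ j * n.choose j * f (x + j) = (-1) ^ n * (fwdDiff 1)^[n] f x := by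
  rw [fwdDiff_iter_eq_sum_shift, mul_sum]
  refine sum_congr rfl fun j hj ↦ ?_
  have hsign : (-1 : R) ^ n * (-1) ^ (n - j) = (-1) ^ j := by
    rw [← pow_add]
    exact neg_one_pow_congr (by grind)
  simp [zsmul_eq_mul, ← mul_assoc, hsign]

theorem sum_neg_one_pow_mul_choose_mul_eval_eq_zero {n : ℕ} {P : R[X]} (hP : P.natDegree < n) :
    ∑ j ∈ range (n + 1), (-1) ^ j * n.choose j * P.eval (j : R) = 0 := by
  simpa [Polynomial.fwdDiff_iter_eq_zero_of_degree_lt hP] using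
    sum_neg_one_pow_mul_choose_mul P.eval n 0

theorem ascPochhammer_eval_add (x : R) (m n : ℕ) :
    (ascPochhammer R (m + n)).eval x =
      (ascPochhammer R m).eval x * (ascPochhammer R n).eval (x + m) := by
  simp [← ascPochhammer_mul]

theorem natDegree_ascPochhammer_comp_X_add_C [IsDomain R] (n : ℕ) (x : R) :
    ((ascPochhammer R n).comp (Polynomial.X + Polynomial.C x)).natDegree = n := by
  rw [Polynomial.natDegree_comp, ascPochhammer_natDegree, Polynomial.natDegree_X_add_C, mul_one]

theorem ascPochhammer_eval_ne_zero [IsDomain R] {x : R} (hx : ∀ m : ℕ, x + m ≠ 0) (n : ℕ) :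
    (ascPochhammer R n).eval x ≠ 0 := by
  rw [Ne, ascPochhammer_eval_eq_zero_iff]
  rintro ⟨m, -, hm⟩
  exact hx m (by rw [hm, add_neg_cancel])

theorem fwdDiff_iter_inv {x : K} (hx : ∀ m : ℕ, x + m ≠ 0) (n : ℕ) :
    (fwdDiff 1)^[n] (·⁻¹) x = (-1) ^ n * n ! / (ascPochhammer K (n + 1)).eval x := by
  induction n generalizing x with
  | zero => simp
  | succ n ih =>
    have hx' (m : ℕ) : x + 1 + m ≠ 0 := by simpa [add_right_comm, add_assoc] using hx (m + 1)
    have hleft : (ascPochhammer K (n + 2)).eval x = x * (ascPochhammer K (n + 1)).eval (x + 1) := by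
      rw [show n + 2 = 1 + (n + 1) by ring]
      simpa using ascPochhammer_eval_add x 1 (n + 1)
    have hright : (ascPochhammer K (n + 2)).eval x =
        (ascPochhammer K (n + 1)).eval x * (x + (n + 1 : ℕ)) := ascPochhammer_succ_eval (n + 1) x
    rw [Function.iterate_succ_apply', fwdDiff, ih hx, ih hx', div_sub_div _ _
      (ascPochhammer_eval_ne_zero hx' _) (ascPochhammer_eval_ne_zero hx _), div_eq_div_iff
      (mul_ne_zero (ascPochhammer_eval_ne_zero hx' _) (ascPochhammer_eval_ne_zero hx _))
      (ascPochhammer_eval_ne_zero hx _), Nat.factorial_succ]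
    push_cast at hright ⊢
    generalize (ascPochhammer K (n + 2)).eval x = A at *
    generalize (ascPochhammer K (n + 1)).eval x = P at *
    generalize (ascPochhammer K (n + 1)).eval (x + 1) = Q at *
    linear_combination (-1) ^ n * n ! * (P * hleft - Q * hright)

theorem sum_neg_one_pow_mul_choose_mul_eval_div {n : ℕ} {Q : K[X]} (hQ : Q.natDegree ≤ n) {x : K}
    (hx : ∀ m : ℕ, x + m ≠ 0) :
    ∑ j ∈ range (n + 1), (-1) ^ j * n.choose j * (Q.eval (j : K) / (x + j)) =
      Q.eval (-x) * n ! / (ascPochhammer K (n + 1)).eval x := by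
  obtain ⟨T, hT⟩ := Polynomial.X_sub_C_dvd_sub_C_eval (a := -x) (p := Q)
  have hsplit (j : ℕ) : Q.eval (j : K) / (x + j) = T.eval (j : K) + Q.eval (-x) * (x + j)⁻¹ := by
    have h := congrArg (Polynomial.eval (j : K)) hT
    simp only [Polynomial.eval_sub, Polynomial.eval_C, map_neg, sub_neg_eq_add,
      Polynomial.eval_mul, Polynomial.eval_add, Polynomial.eval_X] at h
    have := hx j
    field_simp
    linear_combination h
  have hT0 : ∑ j ∈ range (n + 1), (-1) ^ j * n.choose j * T.eval (j : K) = 0 := by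
    rcases eq_or_ne T 0 with rfl | hT'
    · simp
    refine sum_neg_one_pow_mul_choose_mul_eval_eq_zero (Nat.lt_of_succ_le ?_)
    have hdeg := congrArg Polynomial.natDegree hT
    rw [Polynomial.natDegree_sub_C, Polynomial.natDegree_mul (Polynomial.X_sub_C_ne_zero _) hT',
      Polynomial.natDegree_X_sub_C, add_comm] at hdeg
    exact hdeg.symm.trans_le hQ
  have hinv : ∑ j ∈ range (n + 1), (-1) ^ j * n.choose j * (x + j)⁻¹ =
      n ! / (ascPochhammer K (n + 1)).eval x := by
    rw [sum_neg_one_pow_mul_choose_mul (·⁻¹) n x, fwdDiff_iter_inv hx, ← mul_div_assoc, ← mul_assoc,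
      ← mul_pow]
    simp
  simp_rw [hsplit, mul_add, sum_add_distrib, hT0, mul_left_comm _ (Q.eval (-x)), ← mul_sum, hinv,
    zero_add, mul_div_assoc]

end FiniteDifferences

section HankelDeterminant

theorem det_mul_prod_diag {R : Type*} [CommRing R] {n : ℕ} {M P : Matrix (Fin n) (Fin n) R}
    (hP : P.IsUpperTriangular) (hMP : (M * P).IsLowerTriangular) :
    M.det * ∏ k, P k k = ∏ k, (M * P) k k := by
  rw [← Matrix.det_of_isUpperTriangular hP, ← Matrix.det_mul, Matrix.det_of_isLowerTriangular _ hMP]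

variable {K : Type*} [Field K] [CharZero K] (α : K)

theorem ringChoose_succ (m : ℕ) :
    Ring.choose α (m + 1) =
      α * (-1) ^ m * (ascPochhammer K m).eval (1 - α) / (m + 1)! := by
  have hdesc : (descPochhammer ℤ (m + 1)).smeval α =
      α * (-1) ^ m * (ascPochhammer K m).eval (1 - α) := by
    induction m with
    | zero => simp
    | succ m ih =>
      rw [descPochhammer_succ_right, Polynomial.smeval_mul, ih, ascPochhammer_succ_eval,
        Polynomial.smeval_sub, Polynomial.smeval_X, Polynomial.smeval_natCast]
      simp only [pow_one, pow_zero, nsmul_eq_mul, mul_one]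
      push_cast
      ring
  rw [Ring.choose_eq_smul, smul_eq_mul, hdesc, inv_mul_eq_div]

/-- The coefficient of `x ^ j` in the `n`-th (unnormalised) orthogonal polynomial for the moments
`Ring.choose α (m + 1)`. -/
noncomputable def orthogonalCoeff (n j : ℕ) : K :=
  n.choose j * (n + j)! * (ascPochhammer K (n - j)).eval (1 - α + j)

theorem orthogonalCoeff_mul_ringChoose (i : ℕ) {n j : ℕ} (hj : j ≤ n) :
    orthogonalCoeff α n j * Ring.choose α (i + j + 1) =
      α * (ascPochhammer K n).eval (1 - α) * (-1) ^ i *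
        ((-1) ^ j * n.choose j * ((ascPochhammer K i).eval (1 - α + j) *
          ((n + j)! / (i + j + 1)!))) := by
  have hn := ascPochhammer_eval_add (1 - α) j (n - j)
  have hij := ascPochhammer_eval_add (1 - α) j i
  rw [Nat.add_sub_cancel' hj] at hn
  rw [orthogonalCoeff, ringChoose_succ, add_comm i j, hn, hij]
  ring

theorem factorial_add_div_factorial (m n : ℕ) :
    ((m + n)! / m ! : K) = (ascPochhammer K n).eval (m + 1 : K) := by
  rw [← factorial_mul_ascPochhammer,
    mul_div_cancel_left₀ _ (Nat.cast_ne_zero.2 m.factorial_ne_zero)]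

theorem sum_orthogonalCoeff_mul_ringChoose_eq_zero {n i : ℕ} (hi : i < n) :
    ∑ j ∈ range (n + 1), orthogonalCoeff α n j * Ring.choose α (i + j + 1) = 0 := by
  let P : K[X] := (ascPochhammer K i).comp (Polynomial.X + Polynomial.C (1 - α)) *
    (ascPochhammer K (n - 1 - i)).comp (Polynomial.X + Polynomial.C (i + 2 : K))
  have hP : P.natDegree < n := by
    refine Polynomial.natDegree_mul_le.trans_lt ?_
    simp only [natDegree_ascPochhammer_comp_X_add_C]
    omega
  have heval (j : ℕ) : P.eval (j : K) =
      (ascPochhammer K i).eval (1 - α + j) * ((n + j)! / (i + j + 1)!) := by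
    rw [show n + j = i + j + 1 + (n - 1 - i) by omega, factorial_add_div_factorial]
    simp [P]
    ring_nf
  calc
    _ = α * (ascPochhammer K n).eval (1 - α) * (-1) ^ i *
        ∑ j ∈ range (n + 1), (-1) ^ j * n.choose j * P.eval (j : K) := by
      rw [mul_sum]
      refine sum_congr rfl fun j hj ↦ ?_
      rw [orthogonalCoeff_mul_ringChoose α i (Nat.lt_succ_iff.1 (mem_range.1 hj)), heval]
    _ = 0 := by rw [sum_neg_one_pow_mul_choose_mul_eval_eq_zero hP, mul_zero]

theorem sum_orthogonalCoeff_mul_ringChoose_self (n : ℕ) :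
    ∑ j ∈ range (n + 1), orthogonalCoeff α n j * Ring.choose α (n + j + 1) =
      α * (ascPochhammer K n).eval (1 + α) * (ascPochhammer K n).eval (1 - α) *
        n ! ^ 2 / (2 * n + 1)! := by
  let Q : K[X] := (ascPochhammer K n).comp (Polynomial.X + Polynomial.C (1 - α))
  have hx (m : ℕ) : (n + 1 : K) + m ≠ 0 := by
    rw [add_right_comm]
    exact_mod_cast Nat.succ_ne_zero (n + m)
  have hreflect : Q.eval (-(n + 1 : K)) = (-1) ^ n * (ascPochhammer K n).eval (1 + α) := by
    rw [show Q.eval (-(n + 1 : K)) = (ascPochhammer K n).eval (-(α + n)) by simp [Q]; ring_nf,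
      ascPochhammer_eval_neg_eq_descPochhammer, descPochhammer_eval_eq_ascPochhammer]
    ring_nf
  have hterm (j : ℕ) : (ascPochhammer K n).eval (1 - α + j) * ((n + j)! / (n + j + 1)! : K) =
      Q.eval (j : K) / (n + 1 + j) := by
    have h₀ : ((n + j)! : K) ≠ 0 := Nat.cast_ne_zero.2 (Nat.factorial_ne_zero _)
    have h₁ := hx j
    simp only [Nat.factorial_succ, Q, Polynomial.eval_comp, Polynomial.eval_add, Polynomial.eval_X,
      Polynomial.eval_C, add_comm (1 - α)]
    push_cast
    rw [add_right_comm (n : K)]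
    field_simp
  have h₀ : (n ! : K) ≠ 0 := Nat.cast_ne_zero.2 n.factorial_ne_zero
  have hsign : (-1 : K) ^ n * (-1) ^ n = 1 := by simp [← mul_pow]
  have hfact : (n ! : K) * (ascPochhammer K (n + 1)).eval (n + 1 : K) = (2 * n + 1)! := by
    rw [factorial_mul_ascPochhammer, two_mul, add_assoc]
  calc
    _ = α * (ascPochhammer K n).eval (1 - α) * (-1) ^ n *
        ∑ j ∈ range (n + 1), (-1) ^ j * n.choose j * (Q.eval (j : K) / (n + 1 + j)) := by
      rw [mul_sum]
      refine sum_congr rfl fun j hj ↦ ?_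
      rw [orthogonalCoeff_mul_ringChoose α n (Nat.lt_succ_iff.1 (mem_range.1 hj)), hterm]
    _ = _ := by
      rw [sum_neg_one_pow_mul_choose_mul_eval_div
        (natDegree_ascPochhammer_comp_X_add_C n _).le hx, hreflect, ← hfact]
      have h₁ := ascPochhammer_eval_ne_zero hx (n + 1)
      field_simp
      linear_combination
        α * (ascPochhammer K n).eval (1 + α) * (ascPochhammer K n).eval (1 - α) * hsign

theorem det_ringChoose (n : ℕ) :
    (Matrix.of fun i j : Fin n ↦ Ring.choose α (i + j + 1 : ℕ)).det =
      ∏ k ∈ range n, α * (ascPochhammer K k).eval (1 + α) * (ascPochhammer K k).eval (1 - α) *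
        k ! ^ 2 / ((2 * k)! * (2 * k + 1)!) := by
  let P : Matrix (Fin n) (Fin n) K := Matrix.of fun j m ↦ orthogonalCoeff α m j
  have hcoeff {m j : ℕ} (h : m < j) : orthogonalCoeff α m j = 0 := by
    simp [orthogonalCoeff, Nat.choose_eq_zero_of_lt h]
  have hmul (i m : Fin n) : ((Matrix.of fun i j : Fin n ↦ Ring.choose α (i + j + 1 : ℕ)) * P) i m =
      ∑ j ∈ range (m + 1), orthogonalCoeff α m j * Ring.choose α (i + j + 1) := by
    calc
      _ = ∑ j ∈ range n, orthogonalCoeff α m j * Ring.choose α (i + j + 1) := by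
        rw [Matrix.mul_apply, Finset.sum_range]
        exact sum_congr rfl fun _ _ ↦ mul_comm _ _
      _ = _ := by
        refine (sum_subset (range_subset_range.2 m.isLt) fun j _ hj ↦ ?_).symm
        rw [hcoeff (by simpa using hj), zero_mul]
  have h := det_mul_prod_diag (P := P) (fun i j hij ↦ hcoeff hij) fun i j hij ↦
    (hmul i j).trans (sum_orthogonalCoeff_mul_ringChoose_eq_zero α hij)
  have hdiag (k : ℕ) : orthogonalCoeff α k k = (2 * k)! := by
    simp [orthogonalCoeff, two_mul]
  simp only [hmul, sum_orthogonalCoeff_mul_ringChoose_self, P, Matrix.of_apply, hdiag] at h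
  rw [Finset.prod_range]
  simp_rw [div_mul_eq_div_div_swap]
  rw [prod_div_distrib, ← h, mul_div_cancel_right₀]
  exact prod_ne_zero_iff.2 fun k _ ↦ Nat.cast_ne_zero.2 (Nat.factorial_ne_zero _)

theorem prod_factorial_mul_prod_add_factorial (n : ℕ) :
    (∏ k ∈ range n, k !) * ∏ k ∈ range n, (n + k)! = ∏ k ∈ range n, (2 * k)! * (2 * k + 1)! := by
  calc
    _ = ∏ k ∈ range (2 * n), k ! := by rw [two_mul, prod_range_add]
    _ = _ := by
      induction n with
      | zero => rfl
      | succ n ih =>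
        rw [mul_add_one, prod_range_succ, prod_range_succ, ih, mul_assoc, prod_range_succ]

theorem pow_mul_ascPochhammer_mul_ascPochhammer_mul_factorial (k : ℕ) :
    (27 ^ k * (ascPochhammer K k).eval (4 / 3) * (ascPochhammer K k).eval (2 / 3) * k ! : K) =
      (3 * k + 1)! := by
  induction k with
  | zero => simp
  | succ k ih =>
    rw [show 3 * (k + 1) + 1 = 3 * k + 1 + 1 + 1 + 1 by ring, Nat.factorial_succ (_ + 1 + 1),
      Nat.factorial_succ (_ + 1), Nat.factorial_succ (_ + 1), Nat.factorial_succ k]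
    push_cast
    rw [← ih, ascPochhammer_succ_eval, ascPochhammer_succ_eval]
    ring

variable (K) in
theorem pow_mul_det_ringChoose_one_third (n : ℕ) :
    3 ^ n * 27 ^ (∑ k ∈ range n, k) *
        (Matrix.of fun i j : Fin n ↦ Ring.choose (1 / 3 : K) (i + j + 1 : ℕ)).det =
      ∏ k ∈ range n, ((3 * k + 1)! / (n + k)! : K) := by
  have hterm (k : ℕ) :
      3 * 27 ^ k * ((1 / 3 : K) * (ascPochhammer K k).eval (1 + 1 / 3) *
        (ascPochhammer K k).eval (1 - 1 / 3) * k ! ^ 2 / ((2 * k)! * (2 * k + 1)!)) =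
      (3 * k + 1)! * (k ! / ((2 * k)! * (2 * k + 1)! : ℕ)) := by
    rw [← pow_mul_ascPochhammer_mul_ascPochhammer_mul_factorial]
    norm_num
    ring
  have hprod : ∏ k ∈ range n, (k ! / ((2 * k)! * (2 * k + 1)! : ℕ) : K) =
      ∏ k ∈ range n, ((n + k)! : K)⁻¹ := by
    rw [prod_div_distrib, prod_inv_distrib, ← Nat.cast_prod, ← Nat.cast_prod, ← Nat.cast_prod,
      ← prod_factorial_mul_prod_add_factorial, Nat.cast_mul, div_mul_cancel_left₀]
    exact Nat.cast_ne_zero.2 (prod_ne_zero_iff.2 fun k _ ↦ k.factorial_ne_zero)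
  rw [det_ringChoose, ← prod_pow_eq_pow_sum, ← card_range n, ← prod_const, card_range,
    ← prod_mul_distrib, ← prod_mul_distrib]
  simp_rw [hterm, div_eq_mul_inv ((3 * _ + 1)! : K), prod_mul_distrib, hprod]

end HankelDeterminant

section CoefficientMatrices

open PowerSeries

variable {R : Type*} [CommRing R] {p q : R⟦X⟧}

/-- The bivariate series `∑ M i j * x ^ i * y ^ j`, encoded as a series in `y` whose coefficients
are series in `x`. -/
noncomputable def bivariateSeries (M : ℕ → ℕ → R) : R⟦X⟧⟦X⟧ := mk fun j ↦ mk fun i ↦ M i j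

/-- The matrix of the coefficients of `x ^ i * y ^ j` with `i, j < n`, with the encoding of
`bivariateSeries`. -/
noncomputable def coeffMatrix (n : ℕ) (F : R⟦X⟧⟦X⟧) : Matrix (Fin n) (Fin n) R :=
  Matrix.of fun i j ↦ coeff i (coeff j F)

/-- The leading `n × n` block of the Riordan array of the pair `(f, p)`. -/
noncomputable def riordanMatrix (n : ℕ) (f p : R⟦X⟧) : Matrix (Fin n) (Fin n) R :=
  Matrix.of fun i k ↦ coeff i (f * p ^ (k : ℕ))

theorem det_riordanMatrix (n : ℕ) (f : R⟦X⟧) (hp : constantCoeff p = 0) :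
    (riordanMatrix n f p).det = constantCoeff f ^ n * coeff 1 p ^ ∑ k ∈ range n, k := by
  obtain ⟨p, rfl⟩ := X_dvd_iff.2 hp
  have hentry (i k : ℕ) :
      coeff i (f * (X * p) ^ k) = if k ≤ i then coeff (i - k) (f * p ^ k) else 0 := by
    rw [mul_pow, mul_left_comm, coeff_X_pow_mul']
  rw [Matrix.det_of_isLowerTriangular]
  · simp [riordanMatrix, hentry, prod_mul_distrib, prod_pow_eq_pow_sum, Finset.sum_range]
  · intro i j hij
    exact (hentry i j).trans (if_neg (not_le.2 (Fin.lt_def.1 hij)))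

/-- Substitution of a series without constant term. Stated over a single ring, it can be applied to
series with coefficients in `R⟦X⟧`, where `PowerSeries.subst` has to choose between two algebra
structures. -/
noncomputable def substHom (hp : constantCoeff p = 0) : R⟦X⟧ →+* R⟦X⟧ :=
  (substAlgHom (R := R) (HasSubst.of_constantCoeff_zero' hp)).toRingHom

theorem substHom_apply (hp : constantCoeff p = 0) (F : R⟦X⟧) : substHom hp F = F.subst p :=
  congrFun (coe_substAlgHom (R := R) (HasSubst.of_constantCoeff_zero' hp)) F

theorem substHom_X (hp : constantCoeff p = 0) : substHom hp X = p :=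
  substAlgHom_X (R := R) (HasSubst.of_constantCoeff_zero' hp)

theorem substHom_C (hp : constantCoeff p = 0) (r : R) : substHom hp (C r) = C r :=
  (substAlgHom (R := R) (HasSubst.of_constantCoeff_zero' hp)).commutes r

theorem map_substHom {S : Type*} [CommRing S] (h : R →+* S) (hp : constantCoeff p = 0)
    (hp' : constantCoeff (map h p) = 0) (F : R⟦X⟧) :
    map h (substHom hp F) = substHom hp' (map h F) := by
  rw [substHom_apply, substHom_apply]
  exact map_subst (HasSubst.of_constantCoeff_zero' hp) F

theorem coeff_mul_substHom (hp : constantCoeff p = 0) (f F : R⟦X⟧) {n i : ℕ} (hi : i < n) :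
    coeff i (f * substHom hp F) = ∑ k ∈ range n, coeff k F * coeff i (f * p ^ k) := by
  have hpoly (P : R[X]) : substHom hp P = Polynomial.aeval p P := by
    rw [substHom_apply, subst_coe (HasSubst.of_constantCoeff_zero' hp)]
  have hhigh (Q : R⟦X⟧) : coeff i (f * (p ^ n * Q)) = 0 := by
    obtain ⟨p, rfl⟩ := X_dvd_iff.2 hp
    rw [mul_pow, mul_assoc, mul_left_comm, coeff_X_pow_mul', if_neg hi.not_ge]
  obtain ⟨m, rfl⟩ : ∃ m, n = m + 1 := ⟨n - 1, by omega⟩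
  have hsplit := congrArg (substHom hp) (eq_X_pow_mul_shift_add_trunc (m + 1) F)
  rw [map_add, map_mul, map_pow, substHom_X, hpoly] at hsplit
  rw [hsplit, mul_add, map_add, hhigh, zero_add,
    Polynomial.aeval_eq_sum_range' (natDegree_trunc_lt F m), mul_sum, map_sum]
  refine sum_congr rfl fun k hk ↦ ?_
  rw [coeff_trunc, if_pos (mem_range.1 hk), mul_smul_comm, coeff_smul, smul_eq_mul]

theorem constantCoeff_substHom (hp : constantCoeff p = 0) (F : R⟦X⟧) :
    constantCoeff (substHom hp F) = constantCoeff F := by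
  simpa using coeff_mul_substHom hp 1 F zero_lt_one

theorem constantCoeff_map_C (hq : constantCoeff q = 0) :
    constantCoeff (map C q : R⟦X⟧⟦X⟧) = 0 := by
  rw [← coeff_zero_eq_constantCoeff_apply, coeff_map, coeff_zero_eq_constantCoeff_apply, hq,
    map_zero]

/-- The substitution `(x, y) ↦ (p(x), q(y))` in bivariate series. -/
noncomputable def bisubst (hp : constantCoeff p = 0) (hq : constantCoeff q = 0) :
    R⟦X⟧⟦X⟧ →+* R⟦X⟧⟦X⟧ :=
  (substHom (p := map C q) (constantCoeff_map_C hq)).comp (map (substHom hp))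

theorem bisubst_C (hp : constantCoeff p = 0) (hq : constantCoeff q = 0) (F : R⟦X⟧) :
    bisubst hp hq (C F) = C (substHom hp F) := by
  rw [bisubst, RingHom.comp_apply, PowerSeries.map_C, substHom_C]

theorem bisubst_map_C (hp : constantCoeff p = 0) (hq : constantCoeff q = 0) (F : R⟦X⟧) :
    bisubst hp hq (map C F) = map C (substHom hq F) := by
  have hconst : map (substHom hp) (map C F) = map C F := by
    ext1 l
    rw [coeff_map, coeff_map, substHom_C]
  rw [bisubst, RingHom.comp_apply, hconst, map_substHom]

theorem coeffMatrix_mul_bisubst (hp : constantCoeff p = 0) (hq : constantCoeff q = 0) (n : ℕ)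
    (f g : R⟦X⟧) (F : R⟦X⟧⟦X⟧) :
    coeffMatrix n (C f * map C g * bisubst hp hq F) =
      riordanMatrix n f p * coeffMatrix n F * (riordanMatrix n g q).transpose := by
  ext i j
  rw [Matrix.mul_apply]
  calc
    coeff i (coeff j (C f * map C g * bisubst hp hq F)) =
        ∑ l ∈ range n, coeff i (f * substHom hp (coeff l F)) * coeff j (g * q ^ l) := by
      rw [mul_assoc, coeff_C_mul, bisubst, RingHom.comp_apply,
        coeff_mul_substHom (p := map C q) (constantCoeff_map_C hq) _ _ j.isLt, mul_sum, map_sum]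
      refine sum_congr rfl fun l _ ↦ ?_
      rw [← map_pow, ← map_mul, coeff_map, coeff_map, ← mul_assoc, coeff_mul_C]
    _ = ∑ l : Fin n, (∑ k : Fin n, coeff i (f * p ^ (k : ℕ)) * coeff k (coeff l F)) *
        coeff j (g * q ^ (l : ℕ)) := by
      rw [Finset.sum_range]
      refine sum_congr rfl fun l _ ↦ ?_
      rw [coeff_mul_substHom hp f _ i.isLt, Finset.sum_range]
      exact congrArg (· * _) (sum_congr rfl fun k _ ↦ mul_comm _ _)

/-- The divided difference `(F(x) - F(y)) / (x - y)`. -/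
noncomputable def dividedDifference (F : R⟦X⟧) : R⟦X⟧⟦X⟧ :=
  bivariateSeries fun i j ↦ coeff (i + j + 1) F

theorem C_X_sub_X_mul_dividedDifference (F : R⟦X⟧) :
    (C (X : R⟦X⟧) - X) * dividedDifference F = C F - map C F := by
  ext j i
  rw [sub_mul, map_sub, map_sub, map_sub, map_sub, coeff_C_mul, coeff_map, coeff_C, coeff_C]
  rcases j with _ | j <;> rcases i with _ | i <;>
    simp [dividedDifference, bivariateSeries, coeff_succ_X_mul, ← add_assoc, add_right_comm _ 1]

theorem C_sub_map_C_mul_bisubst_dividedDifference (hp : constantCoeff p = 0)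
    (hq : constantCoeff q = 0) (F : R⟦X⟧) :
    (C p - map C q) * bisubst hp hq (dividedDifference F) =
      C (substHom hp F) - map C (substHom hq F) := by
  have hX : bisubst hp hq X = map C q := by rw [← map_X C, bisubst_map_C, substHom_X]
  have hC : bisubst hp hq (C X) = C p := by rw [bisubst_C, substHom_X]
  rw [← bisubst_C hp hq, ← bisubst_map_C hp hq, ← map_sub, ← C_X_sub_X_mul_dividedDifference,
    map_mul, map_sub, hX, hC]

end CoefficientMatrices

section Roots

open PowerSeries

theorem eq_of_pow_eq_pow {R : Type*} [CommRing R] [IsDomain R] [CharZero R] {m : ℕ} (hm : m ≠ 0)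
    {a b : R⟦X⟧} (ha : constantCoeff a = 1) (hb : constantCoeff b = 1) (h : a ^ m = b ^ m) :
    a = b := by
  have hmul := (Commute.all a b).geom_sum₂_mul m
  rw [h, sub_self, mul_eq_zero, sub_eq_zero] at hmul
  refine hmul.resolve_left fun hsum ↦ hm ?_
  simpa [ha, hb] using congrArg constantCoeff hsum

theorem constantCoeff_pow_sub_one {R : Type*} [CommRing R] {u : R⟦X⟧} (hu : constantCoeff u = 1)
    (m : ℕ) : constantCoeff (u ^ m - 1) = 0 := by
  simp [hu]

variable {K : Type*} [Field K] [CharZero K] {m : ℕ}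

theorem binomialSeries_one_div_pow (hm : m ≠ 0) : binomialSeries K (1 / m : K) ^ m = 1 + X := by
  have hpow (k : ℕ) (r : K) : binomialSeries K r ^ k = binomialSeries K (k * r) := by
    induction k with
    | zero => simp
    | succ k ih => rw [pow_succ, ih, ← binomialSeries_add, Nat.cast_succ, add_one_mul]
  rw [hpow, mul_one_div_cancel (Nat.cast_ne_zero.2 hm), ← Nat.cast_one, binomialSeries_nat, pow_one]

theorem substHom_binomialSeries_one_div (hm : m ≠ 0) {u : K⟦X⟧} (hu : constantCoeff u = 1) :
    substHom (constantCoeff_pow_sub_one hu m) (binomialSeries K (1 / m : K)) = u := by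
  refine eq_of_pow_eq_pow hm ?_ hu ?_
  · simp [constantCoeff_substHom]
  · rw [← map_pow, binomialSeries_one_div_pow hm, map_add, map_one, substHom_X, add_sub_cancel]

theorem geom_sum₂_mul_bisubst_dividedDifference (hm : m ≠ 0) {u v : K⟦X⟧}
    (hu : constantCoeff u = 1) (hv : constantCoeff v = 1) (hu' : u ≠ 1) :
    (∑ i ∈ range m, C u ^ i * map C v ^ (m - 1 - i)) *
      bisubst (constantCoeff_pow_sub_one hu m) (constantCoeff_pow_sub_one hv m)
        (dividedDifference (binomialSeries K (1 / m : K))) = 1 := by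
  have hne : C u - map C v ≠ 0 := by
    intro h
    have h0 := congrArg (coeff 0) (sub_eq_zero.1 h)
    rw [coeff_zero_C, coeff_map, coeff_zero_eq_constantCoeff_apply, hv, map_one] at h0
    exact hu' h0
  apply mul_left_cancel₀ hne
  have hdiff := C_sub_map_C_mul_bisubst_dividedDifference (constantCoeff_pow_sub_one hu m)
    (constantCoeff_pow_sub_one hv m) (binomialSeries K (1 / m : K))
  rw [substHom_binomialSeries_one_div hm hu, substHom_binomialSeries_one_div hm hv] at hdiff
  rw [← mul_assoc, mul_comm (C u - map C v), (Commute.all _ _).geom_sum₂_mul, mul_one, ← hdiff,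
    map_sub, map_sub, map_pow, map_pow, map_one, map_one, sub_sub_sub_cancel_right]

end Roots

section GeneratingFunction

open PowerSeries

section CommRing

variable (R : Type*) [CommRing R]

theorem bivariateSeries_ite_mul :
    bivariateSeries (fun i j ↦ if i = j then (1 : R) else 0) * (1 - C (X : R⟦X⟧) * X) = 1 := by
  rw [mul_sub, mul_one, mul_left_comm]
  ext j i
  rcases j with _ | j <;> rcases i with _ | i <;>
    simp [bivariateSeries, coeff_one, coeff_succ_mul_X, coeff_succ_X_mul]

theorem bivariateSeries_choose_mul :
    bivariateSeries (fun i j ↦ ((i + j).choose (i + 1) : R)) *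
      ((1 - C (X : R⟦X⟧) - X) * (1 - X)) = X := by
  have hPascal : bivariateSeries (fun i j ↦ ((i + j).choose (i + 1) : R)) *
      (1 - C (X : R⟦X⟧) - X) = PowerSeries.mk fun j ↦ if j = 0 then 0 else 1 := by
    rw [mul_sub, mul_sub, mul_one, mul_comm _ (C X)]
    ext j i
    rcases j with _ | j <;> rcases i with _ | i
    · simp [bivariateSeries]
    · simp [bivariateSeries, coeff_succ_X_mul]
    · simp [bivariateSeries, coeff_succ_mul_X]
    · have hchoose := Nat.choose_succ_succ (i + 1 + j) (i + 1)
      simp [bivariateSeries, coeff_succ_mul_X, coeff_succ_X_mul, coeff_one, ← add_assoc, hchoose,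
        add_right_comm i j 1]
  have hgeom : (PowerSeries.mk fun j ↦ if j = 0 then 0 else 1 : R⟦X⟧⟦X⟧) * (1 - X) = X := by
    rw [mul_sub, mul_one]
    ext1 j
    rcases j with _ | _ | j <;> simp [coeff_succ_mul_X, coeff_X]
  rw [← mul_assoc, hPascal, hgeom]

/-- The bivariate generating function of the entries of `1 + [C(i + j, i + 1)]`. -/
noncomputable def dppSeries : R⟦X⟧⟦X⟧ :=
  bivariateSeries fun i j ↦ (if i = j then 1 else 0) + ((i + j).choose (i + 1) : R)

theorem dppSeries_mul :
    dppSeries R * ((1 - C (X : R⟦X⟧) * X) * (1 - C (X : R⟦X⟧) - X) * (1 - X)) =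
      (1 - C (X : R⟦X⟧)) * (1 - X + X ^ 2) := by
  have hadd : dppSeries R = bivariateSeries (fun i j ↦ if i = j then (1 : R) else 0) +
      bivariateSeries fun i j ↦ ((i + j).choose (i + 1) : R) := by
    ext j i
    simp [dppSeries, bivariateSeries]
  rw [hadd]
  linear_combination ((1 - C (X : R⟦X⟧) - X) * (1 - X)) * bivariateSeries_ite_mul R +
    (1 - C (X : R⟦X⟧) * X) * bivariateSeries_choose_mul R

theorem coeffMatrix_dppSeries (n : ℕ) :
    coeffMatrix n (dppSeries R) =
      1 + Matrix.of fun i j : Fin n ↦ (((i : ℕ) + j).choose (i + 1) : R) := by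
  ext i j
  simp [coeffMatrix, dppSeries, bivariateSeries, Matrix.one_apply, Fin.ext_iff]

end CommRing

theorem sq_add_mul_add_sq_of_cube_root {R : Type*} [CommRing R] {w x y a b : R}
    (hw : w ^ 2 + w + 1 = 0) (ha : a * (1 + w * x) = 1) (hb : b * (1 + w ^ 2 * y) = 1) :
    ((1 + w ^ 2 * x) * a) ^ 2 + (1 + w ^ 2 * x) * a * ((1 + (w ^ 2) ^ 2 * y) * b) +
        ((1 + (w ^ 2) ^ 2 * y) * b) ^ 2 =
      3 * ((1 - x * y) * (1 - x - y)) * (a * b) ^ 2 := by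
  have hw3 : w ^ 3 = 1 := by linear_combination (w - 1) * hw
  have hw4 : (w ^ 2) ^ 2 = w := by linear_combination w * hw3
  have h3 : (1 - w) * (1 - w ^ 2) = 3 := by linear_combination hw3 - hw
  rw [hw4]
  set A := (1 + w ^ 2 * x) * (1 + w ^ 2 * y)
  set B := (1 + w * x) * (1 + w * y)
  have hAab : (1 + w ^ 2 * x) * a = A * (a * b) := by
    linear_combination -((1 + w ^ 2 * x) * a) * hb
  have hBab : (1 + w * y) * b = B * (a * b) := by
    linear_combination -((1 + w * y) * b) * ha
  have hwB : A - w * B = (1 - w) * (1 - x * y) := by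
    linear_combination (w - 1) * x * y * hw3
  have hwB' : A - w ^ 2 * B = (1 - w ^ 2) * (1 - x - y) := by
    linear_combination -(x + y) * hw3
  calc
    _ = ((A - w * B) * (A - w ^ 2 * B)) * (a * b) ^ 2 := by
      rw [hAab, hBab]
      linear_combination (a * b) ^ 2 * (A * B * hw - B ^ 2 * hw3)
    _ = 3 * ((1 - x * y) * (1 - x - y)) * (a * b) ^ 2 := by
      rw [hwB, hwB', ← h3]
      ring

variable {K : Type*} [Field K]

theorem inv_one_add_C_mul_X_mul (w : K) : (1 + C w * X : K⟦X⟧)⁻¹ * (1 + C w * X) = 1 :=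
  PowerSeries.inv_mul_cancel _ (by simp)

/-- The Möbius transformation `(1 + w ^ 2 * x) / (1 + w * x)`, as a power series. -/
noncomputable def mobius (w : K) : K⟦X⟧ := (1 + C (w ^ 2) * X) * (1 + C w * X)⁻¹

theorem mobius_eq (w : K) : mobius w = 1 + X * (C (w ^ 2 - w) * (1 + C w * X)⁻¹) := by
  rw [mobius, map_sub]
  linear_combination inv_one_add_C_mul_X_mul w

theorem constantCoeff_mobius (w : K) : constantCoeff (mobius w) = 1 := by
  simp [mobius_eq]

theorem coeff_one_mobius (w : K) : coeff 1 (mobius w) = w ^ 2 - w := by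
  simp [mobius_eq, coeff_one]

theorem coeff_one_mobius_pow_sub_one (w : K) (m : ℕ) :
    coeff 1 (mobius w ^ m - 1) = m * (w ^ 2 - w) := by
  simp [coeff_one_pow, coeff_one, coeff_one_mobius, constantCoeff_mobius]

theorem geom_sum₂_mobius {w : K} (hw : w ^ 2 + w + 1 = 0) :
    ∑ i ∈ range 3, C (mobius w) ^ i * map C (mobius (w ^ 2)) ^ (3 - 1 - i) =
      3 * ((1 - C (X : K⟦X⟧) * X) * (1 - C X - X)) *
        (C (1 + C w * X)⁻¹ * map C (1 + C (w ^ 2) * X)⁻¹) ^ 2 := by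
  have ha := congrArg C (inv_one_add_C_mul_X_mul w)
  have hb := congrArg (PowerSeries.map C) (inv_one_add_C_mul_X_mul (w ^ 2))
  have hw' := congrArg (C : K⟦X⟧ →+* K⟦X⟧⟦X⟧) (congrArg (C : K →+* K⟦X⟧) hw)
  simp only [map_add, map_mul, map_pow, map_one, map_zero, PowerSeries.map_C,
    PowerSeries.map_X] at ha hb hw'
  have hquad := sq_add_mul_add_sq_of_cube_root hw' ha hb
  simp only [mobius, map_add, map_mul, map_pow, map_one, PowerSeries.map_C, PowerSeries.map_X]
  rw [← hquad]
  simp only [sum_range_succ, range_zero, sum_empty]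
  ring

theorem mobius_ne_one [CharZero K] {w : K} (hw : w ^ 2 + w + 1 = 0) : mobius w ≠ 1 := by
  intro h
  have hw0 : w ^ 2 - w = 0 := by rw [← coeff_one_mobius, h, coeff_one, if_neg one_ne_zero]
  have hw1 : (3 : K) = 0 := by linear_combination (3 - 2 * w) * hw + (2 * w + 1) * hw0
  exact three_ne_zero hw1

theorem dppSeries_eq_mul_bisubst [CharZero K] {w : K} (hw : w ^ 2 + w + 1 = 0) :
    dppSeries K = C (3 * (1 - X) * ((1 + C w * X)⁻¹) ^ 2) *
      map C ((1 - X + X ^ 2) * (1 - X)⁻¹ * ((1 + C (w ^ 2) * X)⁻¹) ^ 2) *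
      bisubst (constantCoeff_pow_sub_one (constantCoeff_mobius w) 3)
        (constantCoeff_pow_sub_one (constantCoeff_mobius (w ^ 2)) 3)
        (dividedDifference (binomialSeries K (1 / 3 : K))) := by
  have hΨ := geom_sum₂_mul_bisubst_dividedDifference three_ne_zero (constantCoeff_mobius w)
    (constantCoeff_mobius (w ^ 2)) (mobius_ne_one hw)
  rw [geom_sum₂_mobius hw, Nat.cast_ofNat] at hΨ
  have hinv := congrArg (PowerSeries.map C)
    (PowerSeries.inv_mul_cancel (1 - X : K⟦X⟧) (by simp))
  have hD := dppSeries_mul K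
  generalize bisubst _ _ (dividedDifference (binomialSeries K (1 / 3 : K))) = Ψ at hΨ ⊢
  simp only [map_add, map_sub, map_mul, map_pow, map_one, map_ofNat,
    PowerSeries.map_X] at hinv hΨ ⊢
  generalize C (1 + C w * X : K⟦X⟧)⁻¹ = a at hΨ ⊢
  generalize map C (1 + C w ^ 2 * X : K⟦X⟧)⁻¹ = b at hΨ ⊢
  generalize map C (1 - X : K⟦X⟧)⁻¹ = c at hinv ⊢
  linear_combination -dppSeries K * hinv - c * (1 - X) * dppSeries K * hΨ +
    3 * a ^ 2 * b ^ 2 * c * Ψ * hD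

end GeneratingFunction

section Evaluation

open PowerSeries

variable {K : Type*} [Field K] [CharZero K]

theorem coeffMatrix_dividedDifference_binomialSeries (n : ℕ) (r : K) :
    coeffMatrix n (dividedDifference (binomialSeries K r)) =
      Matrix.of fun i j : Fin n ↦ Ring.choose r (i + j + 1 : ℕ) := by
  ext i j
  simp [coeffMatrix, dividedDifference, bivariateSeries]

theorem det_one_add_choose_of_cube_root {w : K} (hw : w ^ 2 + w + 1 = 0) (n : ℕ) :
    (1 + Matrix.of fun i j : Fin n ↦ (((i : ℕ) + j).choose (i + 1) : K)).det =
      ∏ k ∈ range n, ((3 * k + 1)! / (n + k)! : K) := by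
  have hw3 : w ^ 3 = 1 := by linear_combination (w - 1) * hw
  have h27 : 3 * (w ^ 2 - w) * (3 * ((w ^ 2) ^ 2 - w ^ 2)) = 27 := by
    linear_combination 9 * (w ^ 3 - w ^ 2 - w + 2) * hw3 - 9 * hw
  have hp (z : K) : constantCoeff (mobius z ^ 3 - 1) = 0 :=
    constantCoeff_pow_sub_one (constantCoeff_mobius z) 3
  have hf : constantCoeff (3 * (1 - X) * ((1 + C w * X)⁻¹) ^ 2 : K⟦X⟧) = 3 := by
    simp [map_ofNat constantCoeff]
  have hg : constantCoeff
      ((1 - X + X ^ 2) * (1 - X)⁻¹ * ((1 + C (w ^ 2) * X)⁻¹) ^ 2 : K⟦X⟧) = 1 := by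
    simp
  rw [← coeffMatrix_dppSeries, dppSeries_eq_mul_bisubst hw, coeffMatrix_mul_bisubst,
    coeffMatrix_dividedDifference_binomialSeries, Matrix.det_mul, Matrix.det_mul,
    Matrix.det_transpose, det_riordanMatrix n _ (hp w), det_riordanMatrix n _ (hp (w ^ 2)), hf, hg,
    coeff_one_mobius_pow_sub_one, coeff_one_mobius_pow_sub_one, Nat.cast_ofNat,
    ← pow_mul_det_ringChoose_one_third, ← h27, one_pow,
    mul_pow (3 * (w ^ 2 - w))]
  ring

end Evaluation

end DPP

/-- Andrews' theorem: the number of descending plane partitions of order `n` is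
`∏_{k=0}^{n-1} (3k+1)!/(n+k)!`. -/
theorem dpp_count (n : ℕ) :
    (({a : List (List ℕ) | IsDPP a ∧ DPPOrder a n}.ncard : ℚ)) =
      ∏ k ∈ Finset.range n, ((3 * k + 1).factorial : ℚ) / ((n + k).factorial : ℚ) := by
  obtain ⟨ω, hω⟩ : ∃ ω : ℂ, ω ^ 2 + ω + 1 = 0 :=
    ⟨_, by simpa [Polynomial.cyclotomic_three] using
      (Complex.isPrimitiveRoot_exp 3 three_ne_zero).isRoot_cyclotomic three_pos⟩
  have hcount := (DPP.ncard_isDPP_eq_det ℂ n).trans (DPP.det_one_add_choose_of_cube_root hω n)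
  refine Rat.cast_injective (α := ℂ) ?_
  push_cast
  exact hcount
end

section
/- For every n ≥ 1 and every k with 0 ≤ k ≤ n−1, the number of descending plane partitions of order n with exactly k rows and no special part equals the number of permutations of {1,…,n} with exactly k ascents. -/
/-- The number of ascents of a word `l`: positions `k` (0-indexed) with `l_k < l_{k+1}`. -/
def numAscents (l : List ℕ) : ℕ :=
  ((List.range (l.length - 1)).filter fun k => decide (l.getD k 0 < l.getD (k + 1) 0)).length

/-!
Both families are encoded by Lehmer codes, the sequences `e₁, …, eₙ` with `0 ≤ eᵢ ≤ n - i`.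

For a permutation, let `eᵢ` count the letters to the right of `πᵢ` that are larger than `πᵢ`; then
`πᵢ < πᵢ₊₁` exactly when `eᵢ > eᵢ₊₁`.

In a descending plane partition without special parts, a row `r` of length `λ` has all its entries
at least `λ`, the next row `s` has all its entries at most `λ`, and the conditions on the first
entry of `r` and on the columns through `r` and `s` amount to `s` having fewer entries equal to `λ`
than `r` has entries exceeding `λ`. For order `n`, let the first letter of the code be the number of
entries `n` in the top row, replace these entries by `n - 1`, remove the top row if its length is
`n - 1`, and continue with order `n - 1`. A row is removed exactly when the code descends, so the
number of rows is the number of descents.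
-/

theorem ncard_fiber_eq_of_bijOn {α β γ : Type*} {f : α → β} {s : Set α} {t : Set β}
    (hf : Set.BijOn f s t) {g : α → γ} {h : β → γ} (hgh : ∀ a ∈ s, h (f a) = g a) (c : γ) :
    {a | a ∈ s ∧ g a = c}.ncard = {b | b ∈ t ∧ h b = c}.ncard := by
  have himage : {b | b ∈ t ∧ h b = c} = f '' {a | a ∈ s ∧ g a = c} := by
    ext b
    constructor
    · rintro ⟨hb, hc⟩
      obtain ⟨a, ha, rfl⟩ := hf.surjOn hb
      exact ⟨a, ⟨ha, hgh a ha ▸ hc⟩, rfl⟩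
    · rintro ⟨a, ⟨ha, hc⟩, rfl⟩
      exact ⟨hf.mapsTo ha, (hgh a ha).trans hc⟩
  rw [himage, (hf.injOn.mono fun _ ha => ha.1).ncard_image]

section SortedList

variable {α : Type*}

theorem lt_countP_iff_getElem {p : α → Bool} {l : List α}
    (hl : l.Pairwise fun a b => p b → p a) {i : ℕ} :
    i < l.countP p ↔ ∃ h : i < l.length, p l[i] := by
  induction l generalizing i with
  | nil => simp
  | cons a l ih =>
    obtain ⟨ha, hl⟩ := List.pairwise_cons.1 hl
    by_cases hpa : p a
    · cases i <;> simp [hpa, ih hl]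
    · have hnone : ∀ b ∈ a :: l, ¬ p b := by
        simpa [hpa] using fun b hb => mt (ha b hb) hpa
      rw [List.countP_eq_zero.2 hnone]
      simpa using fun h => hnone _ (List.getElem_mem h)

theorem lt_countP_lt_iff_lt_getD {l : List ℕ} (hl : l.Pairwise (· ≥ ·)) {c i : ℕ} :
    i < l.countP (c < ·) ↔ c < l.getD i 0 := by
  have hmono : l.Pairwise fun a b => decide (c < b) → decide (c < a) :=
    hl.imp fun hab hcb => decide_eq_true ((of_decide_eq_true hcb).trans_le hab)
  rw [lt_countP_iff_getElem hmono]
  by_cases hi : i < l.length <;> simp [hi]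

theorem lt_count_iff_getElem_eq [PartialOrder α] [DecidableEq α] {l : List α}
    (hl : l.Pairwise (· ≥ ·)) {N : α} (hN : ∀ a ∈ l, a ≤ N) {i : ℕ} :
    i < l.count N ↔ ∃ h : i < l.length, l[i] = N := by
  have hmax : l.Pairwise fun a b => (b == N) → (a == N) :=
    hl.imp_of_mem fun ha _ hab hb => by
      simp only [beq_iff_eq] at hb ⊢
      exact (hN _ ha).antisymm (hb ▸ hab)
  simpa only [List.count, beq_iff_eq] using lt_countP_iff_getElem hmax

theorem replicate_append_drop_of_le_count [PartialOrder α] [DecidableEq α] {l : List α}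
    (hl : l.Pairwise (· ≥ ·)) {N : α} (hN : ∀ a ∈ l, a ≤ N) {m : ℕ} (hm : m ≤ l.count N) :
    List.replicate m N ++ l.drop m = l := by
  have htake : l.take m = List.replicate m N := by
    have hlen : (l.take m).length = m :=
      List.length_take_of_le (hm.trans List.count_le_length)
    refine List.eq_replicate_iff.2 ⟨hlen, fun a ha => ?_⟩
    obtain ⟨i, hi, rfl⟩ := List.getElem_of_mem ha
    rw [List.getElem_take]
    exact ((lt_count_iff_getElem_eq hl hN).1 (by omega)).2
  rw [← htake, List.take_append_drop]

end SortedList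

/-! ### Lehmer codes -/

/-- Lehmer codes: each letter is at most the number of letters to its right. -/
def IsLehmerCode : List ℕ → Prop
  | [] => True
  | m :: e => m ≤ e.length ∧ IsLehmerCode e

/-- The Lehmer codes with `n` letters, which encode both sides of the enumeration. -/
def lehmerCodes (n : ℕ) : Set (List ℕ) := {e | IsLehmerCode e ∧ e.length = n}

theorem cons_mem_lehmerCodes {n m : ℕ} {e : List ℕ} :
    m :: e ∈ lehmerCodes (n + 1) ↔ m ≤ n ∧ e ∈ lehmerCodes n := by
  simp only [lehmerCodes, Set.mem_ofPred_eq, IsLehmerCode, List.length_cons]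
  constructor
  · rintro ⟨⟨hm, he⟩, hlen⟩
    exact ⟨by omega, he, by omega⟩
  · rintro ⟨hm, he, rfl⟩
    exact ⟨⟨hm, he⟩, rfl⟩

/-- The number of descents of a word, a virtual letter `0` being appended at its end: a nonzero last
letter is a descent. -/
def numDescents : List ℕ → ℕ
  | [] => 0
  | m :: e => numDescents e + if e.headD 0 < m then 1 else 0

/-- The Lehmer code of a word, in the variant that records for each letter how many letters to its
right are larger (rather than smaller), so that ascents become descents. -/
def lehmerCode {α : Type*} [LinearOrder α] : List α → List ℕ
  | [] => []
  | x :: l => l.countP (x < ·) :: lehmerCode l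

section LehmerCode

variable {α : Type*} [LinearOrder α]

theorem length_lehmerCode (l : List α) : (lehmerCode l).length = l.length := by
  induction l with
  | nil => rfl
  | cons x l ih => simp [lehmerCode, ih]

theorem isLehmerCode_lehmerCode (l : List α) : IsLehmerCode (lehmerCode l) := by
  induction l with
  | nil => trivial
  | cons x l ih => exact ⟨List.countP_le_length.trans (length_lehmerCode l).ge, ih⟩

theorem countP_lt_strictAnti {l : List α} {x y : α} (hy : y ∈ l) (hxy : x < y) :
    l.countP (y < ·) < l.countP (x < ·) := by
  obtain ⟨l₁, l₂, rfl⟩ := List.append_of_mem hy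
  have hmono (l : List α) : l.countP (y < ·) ≤ l.countP (x < ·) :=
    List.countP_mono_left fun z _ hz => by simpa using hxy.trans (by simpa using hz)
  have := hmono l₁
  have := hmono l₂
  rw [List.countP_append, List.countP_append, List.countP_cons_of_neg (by simp),
    List.countP_cons_of_pos (by simpa using hxy)]
  omega

theorem eq_of_countP_lt_eq {l : List α} {x y : α} (hx : x ∈ l) (hy : y ∈ l)
    (h : l.countP (x < ·) = l.countP (y < ·)) : x = y := by
  rcases lt_trichotomy x y with hxy | hxy | hxy
  · exact absurd h (countP_lt_strictAnti hy hxy).ne'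
  · exact hxy
  · exact absurd h (countP_lt_strictAnti hx hxy).ne

theorem exists_mem_countP_lt_eq {l : List α} (hl : l.Nodup) {m : ℕ} (hm : m < l.length) :
    ∃ x ∈ l, l.countP (x < ·) = m := by
  have hmaps : ∀ x ∈ l.toFinset, l.countP (x < ·) ∈ Finset.range l.length := by
    intro x hx
    exact Finset.mem_range.2 (List.countP_lt_length_iff.2 ⟨x, by simpa using hx, by simp⟩)
  have hinj : Set.InjOn (fun x => l.countP (x < ·)) l.toFinset := by
    intro x hx y hy
    exact eq_of_countP_lt_eq (by simpa using hx) (by simpa using hy)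
  have hsurj := Finset.surjOn_of_injOn_of_card_le _ hmaps hinj
    (by rw [Finset.card_range, List.toFinset_card_of_nodup hl])
  obtain ⟨x, hx, hxm⟩ := hsurj (Finset.mem_coe.2 (Finset.mem_range.2 hm))
  exact ⟨x, by simpa using hx, hxm⟩

theorem eq_of_perm_of_lehmerCode_eq {l l' : List α} (hperm : l.Perm l')
    (hcode : lehmerCode l = lehmerCode l') : l = l' := by
  induction l generalizing l' with
  | nil => exact hperm.nil_eq
  | cons x l ih =>
    obtain _ | ⟨x', l'⟩ := l'
    · exact absurd hperm.symm.nil_eq (by simp)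
    obtain ⟨hhead, htail⟩ := List.cons.inj hcode
    have hrank : (x :: l).countP (x < ·) = (x :: l).countP (x' < ·) := by
      rw [hperm.countP_eq (x' < ·)]
      simpa using hhead
    obtain rfl : x = x' :=
      eq_of_countP_lt_eq List.mem_cons_self (hperm.mem_iff.2 List.mem_cons_self) hrank
    rw [ih hperm.cons_inv htail]

theorem exists_perm_lehmerCode_eq {s : List α} (hs : s.Nodup) {e : List ℕ}
    (he : e ∈ lehmerCodes s.length) : ∃ l, l.Perm s ∧ lehmerCode l = e := by
  induction e generalizing s with
  | nil =>
    obtain rfl : s = [] := List.length_eq_zero_iff.1 he.2.symm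
    exact ⟨[], .nil, rfl⟩
  | cons m e ih =>
    obtain ⟨⟨hm, hcode⟩, hlen⟩ := he
    rw [List.length_cons] at hlen
    obtain ⟨x, hx, rfl⟩ := exists_mem_countP_lt_eq hs (m := m) (by omega)
    obtain ⟨l, hl, rfl⟩ := ih (hs.erase x) ⟨hcode, by rw [List.length_erase_of_mem hx]; omega⟩
    have hperm : (x :: l).Perm s := (hl.cons x).trans (List.perm_cons_erase hx).symm
    refine ⟨x :: l, hperm, ?_⟩
    simp [lehmerCode, ← hperm.countP_eq]

theorem bijOn_lehmerCode {s : List α} (hs : s.Nodup) :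
    Set.BijOn lehmerCode {l | l.Perm s} (lehmerCodes s.length) :=
  ⟨fun l hl => ⟨isLehmerCode_lehmerCode l, (length_lehmerCode l).trans (List.Perm.length_eq hl)⟩,
    fun _ hl _ hl' => eq_of_perm_of_lehmerCode_eq (List.Perm.trans hl (List.Perm.symm hl')),
    fun _ he => exists_perm_lehmerCode_eq hs he⟩

end LehmerCode

theorem numAscents_cons_cons (x y : ℕ) (l : List ℕ) :
    numAscents (x :: y :: l) = numAscents (y :: l) + if x < y then 1 else 0 := by
  simp only [numAscents, List.length_cons, Nat.add_sub_cancel, List.range_succ_eq_map,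
    List.filter_cons, List.filter_map]
  split_ifs <;> simp_all [Function.comp_def]

theorem countP_lt_lt_countP_lt_cons_iff {α : Type*} [LinearOrder α] {x y : α} {l : List α} :
    l.countP (y < ·) < (y :: l).countP (x < ·) ↔ x < y := by
  constructor
  · contrapose!
    intro hyx
    rw [List.countP_cons_of_neg (by simpa using hyx)]
    exact List.countP_mono_left fun z _ hz => by simpa using hyx.trans_lt (by simpa using hz)
  · intro hxy
    simpa using countP_lt_strictAnti (List.mem_cons_self (l := l)) hxy

theorem numDescents_lehmerCode (l : List ℕ) : numDescents (lehmerCode l) = numAscents l := by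
  induction l with
  | nil => rfl
  | cons x l ih =>
    cases l with
    | nil => rfl
    | cons y l =>
      rw [numAscents_cons_cons, lehmerCode, numDescents, ih]
      simp only [lehmerCode, List.headD_cons, countP_lt_lt_countP_lt_cons_iff]

/-! ### Descending plane partitions without special parts -/

namespace DPP

/-- The conditions on a single row of a descending plane partition of order `n` without special
parts, except for the one on its first entry. The absence of special parts is `length_le`. -/
structure IsBoundedRow (n : ℕ) (r : List ℕ) : Prop where
  pairwise : r.Pairwise (· ≥ ·)
  length_le : ∀ x ∈ r, r.length ≤ x
  le : ∀ x ∈ r, x ≤ n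

/-- The number of entries equal to `n` in the top row. -/
def topCount (n : ℕ) (a : List (List ℕ)) : ℕ := (a.headD []).count n

/-- Descending plane partitions of order `n` without special parts, with the conditions relating
consecutive rows expressed by counting entries. -/
def IsNonspecial : ℕ → List (List ℕ) → Prop
  | _, [] => True
  | n, r :: t => IsBoundedRow n r ∧ topCount r.length t < r.countP (r.length < ·) ∧
      IsNonspecial r.length t

section Rows

variable {n m : ℕ} {r : List ℕ}

theorem IsBoundedRow.of_le (hr : IsBoundedRow n r) (hm : ∀ x ∈ r, x ≤ m) : IsBoundedRow m r :=
  ⟨hr.pairwise, hr.length_le, hm⟩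

theorem isBoundedRow_replicate (n : ℕ) : IsBoundedRow n (List.replicate n n) where
  pairwise := List.pairwise_replicate.2 (.inr le_rfl)
  length_le x hx := by rw [List.length_replicate, List.eq_of_mem_replicate hx]
  le x hx := (List.eq_of_mem_replicate hx).le

/-- The row obtained by increasing the first `m` entries from `n` to `n + 1`. -/
def raiseRow (n m : ℕ) (r : List ℕ) : List ℕ := List.replicate m (n + 1) ++ r.drop m

theorem length_raiseRow (hm : m ≤ r.count n) : (raiseRow n m r).length = r.length := by
  have := hm.trans List.count_le_length
  simp only [raiseRow, List.length_append, List.length_replicate, List.length_drop]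
  omega

theorem isBoundedRow_raiseRow (hr : IsBoundedRow n r) (hrn : r.length ≤ n) (hm : m ≤ r.count n) :
    IsBoundedRow (n + 1) (raiseRow n m r) := by
  have hdrop : ∀ x ∈ r.drop m, x ≤ n + 1 := fun x hx =>
    (hr.le x (List.mem_of_mem_drop hx)).trans n.le_succ
  have hmem : ∀ x ∈ raiseRow n m r, x = n + 1 ∨ x ∈ r := fun x hx =>
    (List.mem_append.1 hx).imp List.eq_of_mem_replicate List.mem_of_mem_drop
  refine ⟨List.pairwise_append.2 ⟨List.pairwise_replicate.2 (.inr le_rfl),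
    hr.pairwise.drop, fun x hx y hy => ?_⟩, fun x hx => ?_, fun x hx => ?_⟩
  · rw [List.eq_of_mem_replicate hx]
    exact hdrop y hy
  · rw [length_raiseRow hm]
    rcases hmem x hx with rfl | hxr
    · omega
    · exact hr.length_le x hxr
  · rcases hmem x hx with rfl | hxr
    · rfl
    · exact (hr.le x hxr).trans n.le_succ

theorem count_succ_raiseRow (hr : IsBoundedRow n r) : (raiseRow n m r).count (n + 1) = m := by
  have hdrop : (r.drop m).count (n + 1) = 0 :=
    List.count_eq_zero.2 fun h => absurd (hr.le _ (List.mem_of_mem_drop h)) (by omega)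
  rw [raiseRow, List.count_append, List.count_replicate_self, hdrop, add_zero]

theorem map_min_eq_self (hr : ∀ x ∈ r, x ≤ n) : r.map (min n) = r :=
  (List.map_congr_left fun x hx => min_eq_right (hr x hx)).trans r.map_id

theorem map_min_raiseRow (hr : IsBoundedRow n r) (hm : m ≤ r.count n) :
    (raiseRow n m r).map (min n) = r := by
  have hdrop : (r.drop m).map (min n) = r.drop m :=
    map_min_eq_self fun x hx => hr.le x (List.mem_of_mem_drop hx)
  rw [raiseRow, List.map_append, hdrop, List.map_replicate, min_eq_left n.le_succ,
    replicate_append_drop_of_le_count hr.pairwise hr.le hm]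

theorem raiseRow_map_min (hr : IsBoundedRow (n + 1) r) :
    raiseRow n (r.count (n + 1)) (r.map (min n)) = r := by
  have hsplit := replicate_append_drop_of_le_count hr.pairwise hr.le le_rfl
  have hnotMem : n + 1 ∉ r.drop (r.count (n + 1)) := by
    have hcount := congrArg (List.count (n + 1)) hsplit
    rw [List.count_append, List.count_replicate_self] at hcount
    exact List.count_eq_zero.1 (by omega)
  have hdrop : ∀ x ∈ r.drop (r.count (n + 1)), x ≤ n := fun x hx =>
    Nat.le_of_lt_succ (lt_of_le_of_ne (hr.le x (List.mem_of_mem_drop hx))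
      (ne_of_mem_of_not_mem hx hnotMem))
  rw [raiseRow, ← List.map_drop, map_min_eq_self hdrop, hsplit]

theorem isBoundedRow_map_min (hr : IsBoundedRow (n + 1) r) (hrn : r.length ≤ n) :
    IsBoundedRow n (r.map (min n)) where
  pairwise := hr.pairwise.map _ fun _ _ h => min_le_min_left n h
  length_le := by
    simpa [hrn] using hr.length_le
  le := by simp

theorem count_succ_le_count_map_min (n : ℕ) (r : List ℕ) :
    r.count (n + 1) ≤ (r.map (min n)).count n := by
  rw [List.count, List.count, List.countP_map]
  exact List.countP_mono_left fun x _ hx => by simp_all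

theorem map_min_eq_replicate (hr : IsBoundedRow (n + 1) r) (hrn : r.length = n) :
    r.map (min n) = List.replicate n n := by
  rw [List.eq_replicate_iff]
  refine ⟨by simpa using hrn, ?_⟩
  simpa [hrn] using hr.length_le

theorem countP_lt_eq_count_succ (hr : IsBoundedRow (n + 1) r) :
    r.countP (n < ·) = r.count (n + 1) :=
  List.countP_congr fun x hx => by
    have := hr.le x hx
    simp only [decide_eq_true_eq, beq_iff_eq]
    omega

theorem countP_lt_map_min (h : m < n) (r : List ℕ) :
    (r.map (min n)).countP (m < ·) = r.countP (m < ·) := by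
  simp [List.countP_map, Function.comp_def, h]

end Rows

section Arrays

variable {n m : ℕ} {r : List ℕ} {a t : List (List ℕ)}

theorem topCount_cons : topCount n (r :: t) = r.count n := rfl

theorem IsNonspecial.length_lt (h : IsNonspecial n (r :: t)) : r.length < n := by
  obtain ⟨x, hx, hlt⟩ := List.countP_pos_iff.1 (Nat.zero_lt_of_lt h.2.1)
  exact (by simpa using hlt : r.length < x).trans_le (h.1.le x hx)

theorem IsNonspecial.eq_nil (h : IsNonspecial 0 a) : a = [] := by
  cases a with
  | nil => rfl
  | cons r t => exact absurd h.length_lt (Nat.not_lt_zero _)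

/-- Inverse of one step of the encoding: the array of order `n + 1` with first letter `m` of its
code and remaining code that of `a`. If `a` has fewer than `m` entries `n` in its top row, these are
taken from a new top row of `n` entries `n`. -/
def raise (n m : ℕ) (a : List (List ℕ)) : List (List ℕ) :=
  if topCount n a < m then raiseRow n m (List.replicate n n) :: a
  else a.modifyHead (raiseRow n m)

/-- One step of the encoding: lower all entries `n + 1` to `n`, and remove the top row if it has
length `n`. Only the top row can have entries `n + 1`. -/
def lower (n : ℕ) : List (List ℕ) → List (List ℕ)
  | [] => []
  | r :: t => if r.length = n then t else r.map (min n) :: t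

theorem length_raise : (raise n m a).length = a.length + if topCount n a < m then 1 else 0 := by
  unfold raise
  split_ifs <;> simp

theorem isNonspecial_raise (ha : IsNonspecial n a) (hm : m ≤ n) :
    IsNonspecial (n + 1) (raise n m a) := by
  unfold raise
  split_ifs with h
  · have hcount : m ≤ (List.replicate n n).count n := by simpa using hm
    have hrow := isBoundedRow_raiseRow (isBoundedRow_replicate n) (by simp) hcount
    have hlen : (raiseRow n m (List.replicate n n)).length = n := by
      simpa using length_raiseRow hcount
    refine ⟨hrow, ?_, by rwa [hlen]⟩
    rwa [hlen, countP_lt_eq_count_succ hrow, count_succ_raiseRow (isBoundedRow_replicate n)]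
  · cases a with
    | nil => trivial
    | cons r t =>
      have hlt := ha.length_lt
      obtain ⟨hr, hcount, ht⟩ := ha
      have hm' : m ≤ r.count n := not_lt.1 h
      refine ⟨isBoundedRow_raiseRow hr hlt.le hm', ?_, ?_⟩
      · rwa [length_raiseRow hm', ← countP_lt_map_min hlt, map_min_raiseRow hr hm']
      · rwa [length_raiseRow hm']

theorem topCount_raise (ha : IsNonspecial n a) : topCount (n + 1) (raise n m a) = m := by
  unfold raise
  split_ifs with h
  · exact count_succ_raiseRow (isBoundedRow_replicate n)
  · cases a with
    | nil => exact (Nat.eq_zero_of_not_pos h).symm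
    | cons r t => exact count_succ_raiseRow ha.1

theorem lower_raise (ha : IsNonspecial n a) (hm : m ≤ n) : lower n (raise n m a) = a := by
  unfold raise
  split_ifs with h
  · exact if_pos (by simpa using length_raiseRow (r := List.replicate n n) (by simpa using hm))
  · cases a with
    | nil => rfl
    | cons r t =>
      have hm' : m ≤ r.count n := not_lt.1 h
      rw [List.modifyHead_cons, lower, length_raiseRow hm', if_neg ha.length_lt.ne,
        map_min_raiseRow ha.1 hm']

theorem topCount_succ_le (ha : IsNonspecial (n + 1) a) : topCount (n + 1) a ≤ n := by
  cases a with
  | nil => exact n.zero_le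
  | cons r t => exact List.count_le_length.trans (Nat.lt_succ_iff.1 ha.length_lt)

theorem isNonspecial_lower (ha : IsNonspecial (n + 1) a) : IsNonspecial n (lower n a) := by
  cases a with
  | nil => trivial
  | cons r t =>
    have hle := Nat.lt_succ_iff.1 ha.length_lt
    obtain ⟨hr, hcount, ht⟩ := ha
    rw [lower]
    split_ifs with h
    · rwa [← h]
    · refine ⟨isBoundedRow_map_min hr hle, ?_, by rwa [List.length_map]⟩
      rwa [List.length_map, countP_lt_map_min (lt_of_le_of_ne hle h)]

theorem raise_lower (ha : IsNonspecial (n + 1) a) :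
    raise n (topCount (n + 1) a) (lower n a) = a := by
  cases a with
  | nil => rfl
  | cons r t =>
    obtain ⟨hr, hcount, -⟩ := ha
    rw [topCount_cons, lower]
    split_ifs with h
    · rw [h, countP_lt_eq_count_succ hr] at hcount
      rw [raise, if_pos hcount,
        ← map_min_eq_replicate hr h, raiseRow_map_min hr]
    · rw [raise, topCount_cons, if_neg (not_lt.2 (count_succ_le_count_map_min n r)),
        List.modifyHead_cons, raiseRow_map_min hr]

/-- The Lehmer code of an array of order `n`. -/
def code : ℕ → List (List ℕ) → List ℕ
  | 0, _ => []
  | n + 1, a => topCount (n + 1) a :: code n (lower n a)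

/-- The array with a given Lehmer code, inverse to `DPP.code`. -/
def ofCode : List ℕ → List (List ℕ)
  | [] => []
  | m :: e => raise e.length m (ofCode e)

theorem isNonspecial_ofCode {e : List ℕ} (he : IsLehmerCode e) :
    IsNonspecial e.length (ofCode e) := by
  induction e with
  | nil => trivial
  | cons m e ih => exact isNonspecial_raise (ih he.2) he.1

theorem code_mem_lehmerCodes (ha : IsNonspecial n a) : code n a ∈ lehmerCodes n := by
  induction n generalizing a with
  | zero => exact ⟨trivial, rfl⟩
  | succ n ih =>
    exact cons_mem_lehmerCodes.2 ⟨topCount_succ_le ha, ih (isNonspecial_lower ha)⟩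

theorem ofCode_code (ha : IsNonspecial n a) : ofCode (code n a) = a := by
  induction n generalizing a with
  | zero => exact ha.eq_nil.symm
  | succ n ih =>
    have hlower := isNonspecial_lower ha
    rw [code, ofCode, ih hlower, (code_mem_lehmerCodes hlower).2, raise_lower ha]

theorem code_ofCode {e : List ℕ} (he : IsLehmerCode e) : code e.length (ofCode e) = e := by
  induction e with
  | nil => rfl
  | cons m e ih =>
    have hprev := isNonspecial_ofCode he.2
    rw [List.length_cons, ofCode, code, topCount_raise hprev, lower_raise hprev he.1, ih he.2]

theorem bijOn_code (n : ℕ) : Set.BijOn (code n) {a | IsNonspecial n a} (lehmerCodes n) := by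
  refine Set.InvOn.bijOn (f' := ofCode) ⟨fun _ => ofCode_code, ?_⟩
    (fun _ => code_mem_lehmerCodes) ?_
  · rintro e ⟨he, rfl⟩
    exact code_ofCode he
  · rintro e ⟨he, rfl⟩
    exact isNonspecial_ofCode he

theorem headD_code (ha : IsNonspecial n a) : (code n a).headD 0 = topCount n a := by
  cases n with
  | zero => rw [ha.eq_nil]; rfl
  | succ n => rfl

theorem numDescents_code (ha : IsNonspecial n a) : numDescents (code n a) = a.length := by
  induction n generalizing a with
  | zero => rw [ha.eq_nil]; rfl
  | succ n ih =>
    have hlower := isNonspecial_lower ha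
    rw [code, numDescents, ih hlower, headD_code hlower, ← length_raise, raise_lower ha]

end Arrays

/-! ### Comparison with the definition -/

/-- The conditions relating a row `r` of a descending plane partition without special parts to the
next row `s`. Since the rows decrease, `le_length` only concerns the first entry of `s`. -/
structure Precedes (r s : List ℕ) : Prop where
  length_lt : s.length < r.length
  le_length : ∀ x ∈ s, x ≤ r.length
  getD_lt : ∀ p < s.length, s.getD p 0 < r.getD (p + 1) 0

theorem forall_mem_le_iff_getD {r : List ℕ} (hr : r.Pairwise (· ≥ ·)) {c : ℕ} :
    (∀ x ∈ r, x ≤ c) ↔ r.getD 0 0 ≤ c := by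
  cases r with
  | nil => simp
  | cons y r =>
    have := (List.pairwise_cons.1 hr).1
    simp only [List.forall_mem_cons, List.getD_cons_zero, and_iff_left_iff_imp]
    exact fun hy x hx => (this x hx).trans hy

theorem forall_lt_getD_iff {r : List ℕ} (hr : r.Pairwise (· ≥ ·)) :
    (∀ p < r.length, p < r.getD p 0) ↔ ∀ x ∈ r, r.length ≤ x := by
  constructor
  · intro h x hx
    obtain ⟨i, hi, rfl⟩ := List.getElem_of_mem hx
    have hlast := h (r.length - 1) (by omega)
    rw [List.getD_eq_getElem _ _ (by omega)] at hlast
    have : r[r.length - 1] ≤ r[i] :=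
      hr.sortedGE.getElem_ge_getElem_of_le (by omega)
    omega
  · intro h p hp
    rw [List.getD_eq_getElem _ _ hp]
    exact hp.trans_le (h _ (List.getElem_mem hp))

theorem isBoundedRow_and_length_lt_iff {n : ℕ} {r : List ℕ} :
    (r ≠ [] ∧ (∀ x ∈ r, 0 < x) ∧ r.IsChain (· ≥ ·) ∧ r.length < r.getD 0 0 ∧ (∀ x ∈ r, x ≤ n) ∧
      ∀ p < r.length, p < r.getD p 0) ↔ IsBoundedRow n r ∧ r.length < r.getD 0 0 := by
  rw [List.isChain_iff_pairwise]
  constructor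
  · rintro ⟨-, -, hpw, hfirst, hn, hspecial⟩
    exact ⟨⟨hpw, (forall_lt_getD_iff hpw).1 hspecial, hn⟩, hfirst⟩
  · rintro ⟨hr, hfirst⟩
    have hne : r ≠ [] := by
      rintro rfl
      simp at hfirst
    exact ⟨hne, fun x hx => (List.length_pos_of_mem hx).trans_le (hr.length_le x hx), hr.pairwise,
      hfirst, hr.le, (forall_lt_getD_iff hr.pairwise).2 hr.length_le⟩

theorem isChain_iff_getD {α : Type*} {R : α → α → Prop} {l : List α} (d : α) :
    l.IsChain R ↔ ∀ i, i + 1 < l.length → R (l.getD i d) (l.getD (i + 1) d) := by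
  rw [List.isChain_iff_getElem]
  refine forall₂_congr fun i hi => ?_
  rw [List.getD_eq_getElem _ _ hi, List.getD_eq_getElem _ _ (Nat.lt_of_succ_lt hi)]

theorem isDPP_iff_isChain {n : ℕ} {a : List (List ℕ)} :
    IsDPP a ∧ DPPOrder a n ∧ NoSpecialPart a ↔
      (∀ r ∈ a, IsBoundedRow n r ∧ r.length < r.getD 0 0) ∧ a.IsChain Precedes := by
  have hmem {i : ℕ} (hi : i + 1 < a.length) : a.getD (i + 1) [] ∈ a := by
    rw [List.getD_eq_getElem _ _ hi]
    exact List.getElem_mem hi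
  simp only [← isBoundedRow_and_length_lt_iff, isChain_iff_getD [], IsDPP, DPPOrder, NoSpecialPart]
  constructor
  · rintro ⟨⟨hne, hpos, hlen, hpw, hcol, hfirst, hle⟩, hn, hspecial⟩
    refine ⟨fun r hr => ⟨hne r hr, hpos r hr, hpw r hr, hfirst r hr, hn r hr, hspecial r hr⟩,
      fun i hi => ⟨?_, ?_, fun p => hcol i p hi⟩⟩
    · have := hlen i hi
      omega
    · exact (forall_mem_le_iff_getD (List.isChain_iff_pairwise.1 (hpw _ (hmem hi)))).2 (hle i hi)
  · rintro ⟨hrow, hprec⟩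
    refine ⟨⟨fun r hr => (hrow r hr).1, fun r hr => (hrow r hr).2.1, fun i hi => ?_,
      fun r hr => (hrow r hr).2.2.1, fun i p hi => (hprec i hi).getD_lt p,
      fun r hr => (hrow r hr).2.2.2.1, fun i hi => ?_⟩,
      fun r hr => (hrow r hr).2.2.2.2.1, fun r hr => (hrow r hr).2.2.2.2.2⟩
    · have := (hprec i hi).length_lt
      omega
    · exact (forall_mem_le_iff_getD (List.isChain_iff_pairwise.1 (hrow _ (hmem hi)).2.2.1)).1
        (hprec i hi).le_length

theorem forall_getD_lt_iff_count_lt {n : ℕ} {r s : List ℕ} (hr : IsBoundedRow n r)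
    (hs : IsBoundedRow r.length s) (hsr : s.length < r.length) :
    (r.length < r.getD 0 0 ∧ ∀ p < s.length, s.getD p 0 < r.getD (p + 1) 0) ↔
      s.count r.length < r.countP (r.length < ·) := by
  have hcount {p : ℕ} : p < s.count r.length ↔ ∃ h : p < s.length, s[p] = r.length :=
    lt_count_iff_getElem_eq hs.pairwise hs.le
  have hr_iff := @lt_countP_lt_iff_lt_getD _ hr.pairwise r.length
  constructor
  · rintro ⟨hfirst, hcol⟩
    -- Otherwise `s` has an entry `r.length` just below the first entry of `r` that is `≤ r.length`.
    by_contra! hle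
    have hpos := hr_iff.2 hfirst
    set c := r.countP (r.length < ·)
    obtain ⟨hlt, heq⟩ := hcount.1 (show c - 1 < s.count r.length by omega)
    have hnext := hcol (c - 1) hlt
    rw [List.getD_eq_getElem _ _ hlt, heq, Nat.sub_add_cancel hpos] at hnext
    exact lt_irrefl c (hr_iff.2 hnext)
  · intro hlt
    refine ⟨hr_iff.1 (Nat.zero_lt_of_lt hlt), fun p hp => ?_⟩
    rw [List.getD_eq_getElem _ _ hp]
    by_cases heq : s[p] = r.length
    · rw [heq]
      have := hcount.2 ⟨hp, heq⟩
      exact hr_iff.1 (by omega)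
    · rw [List.getD_eq_getElem _ _ (by omega)]
      exact (lt_of_le_of_ne (hs.le _ (List.getElem_mem hp)) heq).trans_le
        (hr.length_le _ (List.getElem_mem _))

theorem forall_mem_le_of_isChain_precedes {r : List ℕ} {t : List (List ℕ)}
    (h : (r :: t).IsChain Precedes) : ∀ s ∈ t, ∀ x ∈ s, x ≤ r.length := by
  let R (r s : List ℕ) : Prop := s.length ≤ r.length ∧ ∀ x ∈ s, x ≤ r.length
  have : Trans R R R := ⟨fun hrs hst => ⟨hst.1.trans hrs.1, fun x hx => (hst.2 x hx).trans hrs.1⟩⟩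
  have hR : (r :: t).IsChain R := h.imp fun _ _ h => ⟨h.length_lt.le, h.le_length⟩
  exact fun s hs => (hR.rel_cons hs).2

theorem length_lt_and_precedes_iff {n : ℕ} {r : List ℕ} {t : List (List ℕ)} (hr : IsBoundedRow n r)
    (ht : IsNonspecial r.length t) :
    (r.length < r.getD 0 0 ∧ ∀ s ∈ t.head?, Precedes r s) ↔
      topCount r.length t < r.countP (r.length < ·) := by
  cases t with
  | nil => simp [topCount, lt_countP_lt_iff_lt_getD hr.pairwise]
  | cons s t =>
    have hsr := ht.length_lt
    rw [topCount_cons, ← forall_getD_lt_iff_count_lt hr ht.1 hsr]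
    simp only [List.head?_cons, Option.mem_some_iff, forall_eq']
    exact and_congr_right fun _ => ⟨Precedes.getD_lt, fun hcol => ⟨hsr, ht.1.le, hcol⟩⟩

theorem isDPP_iff_isNonspecial {n : ℕ} {a : List (List ℕ)} :
    IsDPP a ∧ DPPOrder a n ∧ NoSpecialPart a ↔ IsNonspecial n a := by
  rw [isDPP_iff_isChain]
  induction a generalizing n with
  | nil => simp [IsNonspecial]
  | cons r t ih =>
    rw [List.forall_mem_cons]
    constructor
    · rintro ⟨⟨⟨hr, hfirst⟩, hrows⟩, hchain⟩
      have hle := forall_mem_le_of_isChain_precedes hchain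
      have ht : IsNonspecial r.length t :=
        ih.1 ⟨fun s hs => ⟨(hrows s hs).1.of_le (hle s hs), (hrows s hs).2⟩, hchain.tail⟩
      exact ⟨hr, (length_lt_and_precedes_iff hr ht).1 ⟨hfirst, hchain.rel_head?⟩, ht⟩
    · intro h
      have hlt := h.length_lt
      obtain ⟨hr, hcount, ht⟩ := h
      obtain ⟨hrows, hchain⟩ := ih.2 ht
      obtain ⟨hfirst, hprec⟩ := (length_lt_and_precedes_iff hr ht).2 hcount
      have hle : ∀ s ∈ t, ∀ x ∈ s, x ≤ n := fun s hs x hx => ((hrows s hs).1.le x hx).trans hlt.le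
      exact ⟨⟨⟨hr, hfirst⟩, fun s hs => ⟨(hrows s hs).1.of_le (hle s hs), (hrows s hs).2⟩⟩,
        List.isChain_cons.2 ⟨hprec, hchain⟩⟩

end DPP

/-- The number of descending plane partitions of order `n` with exactly `k` rows and no
special part equals the number of permutations of `{1,…,n}` (as words) with exactly `k`
ascents. -/
theorem dpp_noSpecial_card_eq_perm_ascents (n k : ℕ) (hn : 1 ≤ n) (hk : k ≤ n - 1) :
    {a : List (List ℕ) | IsDPP a ∧ DPPOrder a n ∧ a.length = k ∧ NoSpecialPart a}.ncard =
      {l : List ℕ | l.Perm (List.range' 1 n) ∧ numAscents l = k}.ncard := by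
  have hdpp : {a | IsDPP a ∧ DPPOrder a n ∧ a.length = k ∧ NoSpecialPart a} =
      {a | DPP.IsNonspecial n a ∧ a.length = k} := by
    ext a
    simp only [Set.mem_ofPred_eq, ← DPP.isDPP_iff_isNonspecial]
    tauto
  have hperm := bijOn_lehmerCode (List.nodup_range' (s := 1) (n := n))
  rw [List.length_range'] at hperm
  rw [hdpp]
  exact (ncard_fiber_eq_of_bijOn (DPP.bijOn_code n) (fun _ => DPP.numDescents_code) k).trans
    (ncard_fiber_eq_of_bijOn hperm (fun l _ => numDescents_lehmerCode l) k).symm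
end

section
/- For every n ≥ 1 and every k with 0 ≤ k ≤ n−1, the number of descending plane partitions of order n with exactly k rows and no special part equals the Eulerian number E(n,k). -/
/-- The Eulerian numbers, defined by the recurrence
`E(n,k) = (k+1)E(n-1,k) + (n-k)E(n-1,k-1)` with `E(0,k) = δ_{k,0}`. -/
def Eulerian : ℕ → ℕ → ℕ
  | 0, 0 => 1
  | 0, _ + 1 => 0
  | n + 1, 0 => Eulerian n 0
  | n + 1, k + 1 => (k + 2) * Eulerian n (k + 1) + (n + 1 - (k + 1)) * Eulerian n k

/-!
Read the rows of the array one after the other. In the absence of special parts the resulting word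
determines the rows, since each of them is as long as it can be without containing a special part,
and the inequalities defining a descending plane partition say exactly that the word is weakly
decreasing and that every letter `v` occurs fewer than `v` times. When the letters are placed from
the largest to the smallest, the length of the unfinished row, reduced modulo the current letter,
turns the multiplicities into a sequence whose drops mark the completed rows. Let `P n ℓ` count
such words with letters at most `n` by their rows, when a row of length `ℓ` is already there. Then
`P (n+1) (ℓ+1) = (n+1) X P n ℓ + X (1-X) (P n ℓ)'`, and `P n n = X P n 0` for positive `n`, which
together give the recurrence of the Eulerian polynomials for `P n 0`.
-/

theorem forall_mem_iff_forall_getD {α : Type*} {l : List α} {P : α → Prop} (d : α) :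
    (∀ x ∈ l, P x) ↔ ∀ i < l.length, P (l.getD i d) := by
  rw [List.forall_mem_iff_forall_getElem]
  refine forall₂_congr fun i hi => ?_
  rw [List.getD_eq_getElem _ _ hi]

theorem isChain_iff_forall_getD {α : Type*} {R : α → α → Prop} {l : List α} (d : α) :
    l.IsChain R ↔ ∀ i, i + 1 < l.length → R (l.getD i d) (l.getD (i + 1) d) := by
  rw [List.isChain_iff_getElem]
  refine forall₂_congr fun i hi => ?_
  rw [List.getD_eq_getElem _ _ hi, List.getD_eq_getElem _ _ (Nat.lt_of_succ_lt hi)]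

section SortedLists

variable {α : Type*} [PartialOrder α] {l : List α} {i j : ℕ} {b : α} (d : α)

theorem getD_le_getD_of_sortedGE (hl : l.SortedGE) (hij : i ≤ j) (hj : j < l.length) :
    l.getD j d ≤ l.getD i d := by
  rw [List.getD_eq_getElem _ _ hj, List.getD_eq_getElem _ _ (hij.trans_lt hj)]
  exact hl.getElem_ge_getElem_of_le hij

theorem sortedGE_replicate_append_iff {c : ℕ} (hb : ∀ x ∈ l, x ≤ b) :
    (List.replicate c b ++ l).SortedGE ↔ l.SortedGE := by
  simp only [List.sortedGE_iff_pairwise, List.pairwise_append, List.pairwise_replicate]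
  refine ⟨fun h => h.2.1, fun h => ⟨Or.inr le_rfl, h, fun x hx y hy => ?_⟩⟩
  rw [List.eq_of_mem_replicate hx]
  exact hb y hy

variable [DecidableEq α]

theorem eq_replicate_count_append_filter_ne (hl : l.SortedGE) (hb : ∀ x ∈ l, x ≤ b) :
    l = List.replicate (l.count b) b ++ l.filter (· ≠ b) := by
  have hperm := List.filter_append_perm (· = b) l
  rw [List.filter_eq] at hperm
  simp only [← decide_not] at hperm
  refine hperm.symm.eq_of_sortedGE hl ((sortedGE_replicate_append_iff fun x hx => ?_).2 ?_)
  · exact hb x (List.mem_of_mem_filter hx)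
  · exact (hl.pairwise.filter _).sortedGE

theorem getD_eq_iff_lt_count (hl : l.SortedGE) (hb : ∀ x ∈ l, x ≤ b) (hi : i < l.length) :
    l.getD i d = b ↔ i < l.count b := by
  induction l generalizing i with
  | nil => simp at hi
  | cons x l ih =>
    obtain ⟨hxl, hl⟩ := List.pairwise_cons.1 hl.pairwise
    obtain ⟨hxb, hlb⟩ := List.forall_mem_cons.1 hb
    obtain rfl | hne := eq_or_ne x b
    · cases i with
      | zero => simp
      | succ i => simpa using ih hl.sortedGE hlb (by simpa using hi)
    · have hb' : b ∉ x :: l := by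
        rintro (_ | ⟨_, hbl⟩)
        · exact hne rfl
        · exact hne (hxb.antisymm (hxl b hbl))
      rw [List.count_eq_zero_of_not_mem hb', List.getD_eq_getElem _ _ hi]
      exact iff_of_false (fun h => hb' (h ▸ List.getElem_mem hi)) (Nat.not_lt_zero i)

theorem getD_eq_iff_length_le_add_count (hl : l.SortedGE) (hb : ∀ x ∈ l, b ≤ x)
    (hi : i < l.length) : l.getD i d = b ↔ l.length ≤ i + l.count b := by
  induction l generalizing i with
  | nil => simp at hi
  | cons x l ih =>
    obtain ⟨hxl, hl⟩ := List.pairwise_cons.1 hl.pairwise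
    obtain ⟨hxb, hlb⟩ := List.forall_mem_cons.1 hb
    obtain rfl | hne := eq_or_ne x b
    · have hall : ∀ y ∈ x :: l, x = y :=
        List.forall_mem_cons.2 ⟨rfl, fun y hy => (hlb y hy).antisymm (hxl y hy)⟩
      rw [List.count_eq_length.2 hall, List.getD_eq_getElem _ _ hi]
      exact iff_of_true (hall _ (List.getElem_mem hi)).symm (Nat.le_add_left _ _)
    · rw [List.count_cons_of_ne hne, List.length_cons]
      cases i with
      | zero =>
        have := l.count_le_length (a := b)
        exact iff_of_false hne (by omega)
      | succ i =>
        rw [List.getD_cons_succ, ih hl.sortedGE hlb (by simpa using hi)]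
        omega

end SortedLists

/-- A word whose multiplicity sequence `m v` is an inversion sequence: its letters appear in
weakly decreasing order, and every letter `v` occurs fewer than `v` times. -/
def IsInversionWord (w : List ℕ) : Prop := w.SortedGE ∧ ∀ v ∈ w, w.count v < v

theorem IsInversionWord.pos {w : List ℕ} (hw : IsInversionWord w) : ∀ x ∈ w, 0 < x :=
  fun x hx => (Nat.zero_le _).trans_lt (hw.2 x hx)

/-- A nonempty row of an array none of whose entries is special. -/
def IsNonspecialRow (r : List ℕ) : Prop := r ≠ [] ∧ ∀ p < r.length, p < r.getD p 0

namespace IsNonspecialRow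

variable {r r' : List ℕ}

theorem length_pos (h : IsNonspecialRow r) : 0 < r.length := List.length_pos_iff.2 h.1

theorem length_le_of_mem (h : IsNonspecialRow r) (hs : r.SortedGE) :
    ∀ x ∈ r, r.length ≤ x := by
  rw [forall_mem_iff_forall_getD 0]
  intro i hi
  have hlast := h.2 (r.length - 1) (by omega)
  have hmono := getD_le_getD_of_sortedGE 0 hs (Nat.le_sub_one_of_lt hi) (by omega)
  omega

theorem length_lt_head_iff (h : IsNonspecialRow r) (hs : r.SortedGE) :
    r.length < r.getD 0 0 ↔ r.count r.length < r.length := by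
  have hle := (forall_mem_iff_forall_getD 0).1 (h.length_le_of_mem hs) 0 h.length_pos
  have heq := getD_eq_iff_length_le_add_count 0 hs (h.length_le_of_mem hs) h.length_pos
  omega

/- Entries of `r'` are at most `r.length` and those of `r` at least `r.length`, so a column fails to
decrease only where the initial run of `r.length` in `r'` meets the final run of it in `r`. -/
theorem columns_lt_iff (h : IsNonspecialRow r) (hs : r.SortedGE) (hs' : r'.SortedGE)
    (hr : r.length < r.getD 0 0) (hr' : r'.length < r'.getD 0 0)
    (hle : r'.getD 0 0 ≤ r.length) :
    (∀ p < r'.length, r'.getD p 0 < r.getD (p + 1) 0) ↔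
      r.count r.length + r'.count r.length < r.length := by
  have hge : ∀ x ∈ r, r.length ≤ x := h.length_le_of_mem hs
  have hle' : ∀ x ∈ r', x ≤ r.length := (forall_mem_iff_forall_getD 0).2 fun p hp =>
    (getD_le_getD_of_sortedGE 0 hs' p.zero_le hp).trans hle
  have column_lt_iff : ∀ p < r'.length, r'.getD p 0 < r.getD (p + 1) 0 ↔
      ¬(p < r'.count r.length ∧ r.length ≤ p + 1 + r.count r.length) := by
    intro p hp
    have hp' : p + 1 < r.length := by omega
    rw [← getD_eq_iff_lt_count 0 hs' hle' hp, ← getD_eq_iff_length_le_add_count 0 hs hge hp']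
    have := (forall_mem_iff_forall_getD 0).1 hge (p + 1) hp'
    have := (forall_mem_iff_forall_getD 0).1 hle' p hp
    omega
  rw [forall₂_congr column_lt_iff]
  constructor
  · intro hcol
    have hcount := (h.length_lt_head_iff hs).1 hr
    have hlen := r'.count_le_length (a := r.length)
    by_contra hlt
    exact hcol (r'.count r.length - 1) (by omega) (by omega)
  · omega

end IsNonspecialRow

/-- An array whose rows are the greedy decomposition of its reading word: no entry is special, and
each row starts with an entry that would have been special at the end of the row above. -/
def IsPacked (a : List (List ℕ)) : Prop :=
  (∀ r ∈ a, IsNonspecialRow r) ∧ a.IsChain fun r r' => r'.getD 0 0 ≤ r.length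

/-- The two strict inequalities in the definition of a descending plane partition: every row is
shorter than its diagonal entry, and columns decrease strictly. -/
def IsStrict (a : List (List ℕ)) : Prop :=
  (∀ r ∈ a, r.length < r.getD 0 0) ∧
    a.IsChain fun r r' => ∀ p < r'.length, r'.getD p 0 < r.getD (p + 1) 0

theorem isDPP_and_noSpecialPart_iff_isPacked_and_isStrict {a : List (List ℕ)} :
    IsDPP a ∧ NoSpecialPart a ↔ IsPacked a ∧ (∀ r ∈ a, r.SortedGE) ∧ IsStrict a := by
  simp only [IsPacked, IsStrict, isChain_iff_forall_getD []]
  constructor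
  · rintro ⟨⟨hne, -, -, hrows, hcols, hlen, hhead⟩, hns⟩
    exact ⟨⟨fun r hr => ⟨hne r hr, hns r hr⟩, hhead⟩,
      fun r hr => List.IsChain.sortedGE (hrows r hr), hlen, fun i hi p hp => hcols i p hi hp⟩
  · rintro ⟨⟨hns, hhead⟩, hrows, hlen, hcols⟩
    refine ⟨⟨fun r hr => (hns r hr).1, fun r hr => ?_, fun i hi => ?_,
      fun r hr => (hrows r hr).isChain, fun i p hi hp => hcols i hi p hp, hlen, hhead⟩,
      fun r hr => (hns r hr).2⟩
    · exact (forall_mem_iff_forall_getD 0).2 fun p hp => p.zero_le.trans_lt ((hns r hr).2 p hp)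
    · have hlt := (forall_mem_iff_forall_getD []).1 hlen (i + 1) hi
      have hle := hhead i hi
      omega

theorem isPacked_cons_iff {r : List ℕ} {t : List (List ℕ)} : IsPacked (r :: t) ↔
    IsNonspecialRow r ∧ (∀ r' ∈ t.head?, r'.getD 0 0 ≤ r.length) ∧ IsPacked t := by
  simp only [IsPacked, List.forall_mem_cons, List.isChain_cons]
  tauto

theorem isStrict_cons_iff {r : List ℕ} {t : List (List ℕ)} : IsStrict (r :: t) ↔
    r.length < r.getD 0 0 ∧
      (∀ r' ∈ t.head?, ∀ p < r'.length, r'.getD p 0 < r.getD (p + 1) 0) ∧ IsStrict t := by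
  simp only [IsStrict, List.forall_mem_cons, List.isChain_cons]
  tauto

namespace IsPacked

theorem le_length_of_mem_flatten {r : List ℕ} {t : List (List ℕ)} (h : IsPacked (r :: t))
    (hs : ∀ r' ∈ t, r'.SortedGE) : ∀ x ∈ t.flatten, x ≤ r.length := by
  induction t generalizing r with
  | nil => simp
  | cons r' t ih =>
    obtain ⟨-, hhead, ht⟩ := isPacked_cons_iff.1 h
    obtain ⟨hs', hst⟩ := List.forall_mem_cons.1 hs
    have hr' : IsNonspecialRow r' := (isPacked_cons_iff.1 ht).1
    have hle : ∀ x ∈ r', x ≤ r.length := (forall_mem_iff_forall_getD 0).2 fun p hp =>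
      (getD_le_getD_of_sortedGE 0 hs' p.zero_le hp).trans (hhead r' rfl)
    have hlen : r'.length ≤ r.length := by
      obtain ⟨x, hx⟩ := List.exists_mem_of_ne_nil r' hr'.1
      exact (hr'.length_le_of_mem hs' x hx).trans (hle x hx)
    rw [List.flatten_cons, List.forall_mem_append]
    exact ⟨hle, fun x hx => (ih ht hst x hx).trans hlen⟩

theorem sortedGE_flatten_iff {a : List (List ℕ)} (h : IsPacked a) :
    a.flatten.SortedGE ↔ ∀ r ∈ a, r.SortedGE := by
  simp only [List.sortedGE_iff_pairwise]
  refine ⟨fun hf => (List.pairwise_flatten.1 hf).1, fun hs => ?_⟩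
  induction a with
  | nil => simp
  | cons r t ih =>
    obtain ⟨hsr, hst⟩ := List.forall_mem_cons.1 hs
    obtain ⟨hr, -, ht⟩ := isPacked_cons_iff.1 h
    refine List.pairwise_append.2 ⟨hsr, ih ht hst, fun x hx y hy => ?_⟩
    exact (h.le_length_of_mem_flatten (fun r' hr' => (hst r' hr').sortedGE) y hy).trans
      (hr.length_le_of_mem hsr.sortedGE x hx)

end IsPacked

/- Every letter other than `r.length` lies entirely in `r` or entirely in `w`. -/
theorem forall_count_append_lt_iff {r w : List ℕ} (hr : r ≠ []) (hge : ∀ x ∈ r, r.length ≤ x)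
    (hle : ∀ x ∈ w, x ≤ r.length) :
    (∀ v ∈ r ++ w, (r ++ w).count v < v) ↔
      r.count r.length + w.count r.length < r.length ∧ ∀ v ∈ w, w.count v < v := by
  simp only [List.count_append]
  refine ⟨fun h => ⟨?_, fun v hv => ?_⟩, fun ⟨hlen, hw⟩ v hv => ?_⟩
  · by_cases hmem : r.length ∈ r ++ w
    · exact h _ hmem
    · rw [← List.count_append, List.count_eq_zero_of_not_mem hmem]
      exact List.length_pos_iff.2 hr
  · exact (Nat.le_add_left _ _).trans_lt (h v (List.mem_append_right r hv))
  · obtain hlt | rfl | hgt := lt_trichotomy v r.length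
    · have hvr : v ∉ r := fun hv => (hge v hv).not_gt hlt
      rw [List.count_eq_zero_of_not_mem hvr, zero_add]
      exact hw v ((List.mem_append.1 hv).resolve_left hvr)
    · exact hlen
    · rw [List.count_eq_zero_of_not_mem fun hv => (hle v hv).not_gt hgt]
      exact r.count_le_length.trans_lt hgt

theorem IsPacked.count_length_add_lt_iff {r : List ℕ} {t : List (List ℕ)} (h : IsPacked (r :: t))
    (hs : ∀ r' ∈ r :: t, r'.SortedGE) (ht : IsStrict t) :
    r.count r.length + t.flatten.count r.length < r.length ↔ r.length < r.getD 0 0 ∧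
      ∀ r' ∈ t.head?, ∀ p < r'.length, r'.getD p 0 < r.getD (p + 1) 0 := by
  obtain ⟨hr, hhead, hpt⟩ := isPacked_cons_iff.1 h
  obtain ⟨hsr, hst⟩ := List.forall_mem_cons.1 hs
  cases t with
  | nil => simpa using (hr.length_lt_head_iff hsr).symm
  | cons r' t =>
    obtain ⟨hsr', hst'⟩ := List.forall_mem_cons.1 hst
    have hr' : r'.length < r'.getD 0 0 := (isStrict_cons_iff.1 ht).1
    have hle : r'.getD 0 0 ≤ r.length := hhead r' rfl
    have hnot : r.length ∉ t.flatten := fun hmem => by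
      have := hpt.le_length_of_mem_flatten hst' _ hmem
      omega
    rw [List.flatten_cons, List.count_append, List.count_eq_zero_of_not_mem hnot, add_zero]
    simp only [List.head?_cons, Option.mem_some_iff, forall_eq']
    constructor
    · intro hcount
      have hlt := (hr.length_lt_head_iff hsr).2 (by omega)
      exact ⟨hlt, (hr.columns_lt_iff hsr hsr' hlt hr' hle).2 hcount⟩
    · rintro ⟨hlt, hcols⟩
      exact (hr.columns_lt_iff hsr hsr' hlt hr' hle).1 hcols

theorem IsPacked.isStrict_iff {a : List (List ℕ)} (h : IsPacked a) (hs : ∀ r ∈ a, r.SortedGE) :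
    IsStrict a ↔ ∀ v ∈ a.flatten, a.flatten.count v < v := by
  induction a with
  | nil => simp [IsStrict]
  | cons r t ih =>
    obtain ⟨hr, -, ht⟩ := isPacked_cons_iff.1 h
    obtain ⟨hsr, hst⟩ := List.forall_mem_cons.1 hs
    rw [List.flatten_cons, forall_count_append_lt_iff hr.1 (hr.length_le_of_mem hsr)
      (h.le_length_of_mem_flatten hst), ← ih ht hst, isStrict_cons_iff, ← and_assoc]
    exact and_congr_left fun htstrict => (h.count_length_add_lt_iff hs htstrict).symm

theorem isDPP_and_noSpecialPart_iff {a : List (List ℕ)} :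
    IsDPP a ∧ NoSpecialPart a ↔ IsPacked a ∧ IsInversionWord a.flatten := by
  rw [isDPP_and_noSpecialPart_iff_isPacked_and_isStrict]
  refine and_congr_right fun h => ?_
  rw [IsInversionWord, h.sortedGE_flatten_iff]
  exact and_congr_right h.isStrict_iff

/-- Appends the word `w` greedily to the unfinished row `cur`: a letter joins the current row as
long as it is not special there, and otherwise starts the next row. The empty `cur` stands for no
row having been started. -/
def splitRows (cur : List ℕ) : List ℕ → List (List ℕ)
  | [] => if cur = [] then [] else [cur]
  | x :: w => if cur.length < x then splitRows (cur ++ [x]) w else cur :: splitRows [x] w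

theorem flatten_splitRows (cur w : List ℕ) : (splitRows cur w).flatten = cur ++ w := by
  induction w generalizing cur with
  | nil => by_cases h : cur = [] <;> simp [splitRows, h]
  | cons x w ih => rw [splitRows]; split_ifs <;> simp [ih]

theorem exists_splitRows_eq_append_cons {cur : List ℕ} (h : cur ≠ []) (w : List ℕ) :
    ∃ s t, splitRows cur w = (cur ++ s) :: t := by
  induction w generalizing cur with
  | nil => exact ⟨[], [], by simp [splitRows, h]⟩
  | cons x w ih =>
    rw [splitRows]
    split_ifs with hx
    · obtain ⟨s, t, hst⟩ := ih (List.append_ne_nil_of_left_ne_nil h [x])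
      exact ⟨x :: s, t, by simp [hst]⟩
    · exact ⟨[], splitRows [x] w, by simp⟩

theorem isNonspecialRow_append_singleton {cur : List ℕ} {x : ℕ}
    (hcur : ∀ p < cur.length, p < cur.getD p 0) (hx : cur.length < x) :
    IsNonspecialRow (cur ++ [x]) := by
  refine ⟨by simp, fun p hp => ?_⟩
  obtain hlt | rfl := (Nat.le_of_lt_succ (by simpa using hp)).lt_or_eq
  · rw [List.getD_append _ _ _ _ hlt]
    exact hcur p hlt
  · simpa using hx

theorem isPacked_splitRows {cur w : List ℕ} (hcur : ∀ p < cur.length, p < cur.getD p 0)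
    (hw : ∀ x ∈ w, 0 < x) : IsPacked (splitRows cur w) := by
  induction w generalizing cur with
  | nil =>
    by_cases h : cur = []
    · simp [splitRows, IsPacked, h]
    · simpa [splitRows, IsPacked, IsNonspecialRow, h] using hcur
  | cons x w ih =>
    obtain ⟨hx, hw⟩ := List.forall_mem_cons.1 hw
    rw [splitRows]
    split_ifs with hlt
    · exact ih (isNonspecialRow_append_singleton hcur hlt).2 hw
    · have hne : cur ≠ [] := List.length_pos_iff.1 (by omega)
      refine isPacked_cons_iff.2 ⟨⟨hne, hcur⟩, ?_, ih (by simpa using hx) hw⟩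
      obtain ⟨s, t, hst⟩ := exists_splitRows_eq_append_cons (List.cons_ne_nil x []) w
      simpa [hst] using hlt

theorem splitRows_append {cur r w : List ℕ} (h : IsNonspecialRow (cur ++ r)) :
    splitRows cur (r ++ w) = splitRows (cur ++ r) w := by
  induction r generalizing cur with
  | nil => simp
  | cons x r ih =>
    have hx : cur.length < x := by simpa using h.2 cur.length (by simp)
    rw [List.cons_append, splitRows, if_pos hx, ih (by simpa using h)]
    simp

theorem splitRows_eq_cons_of_full {r w : List ℕ} (hr : r ≠ [])
    (hw : ∀ x ∈ w.head?, 0 < x ∧ x ≤ r.length) : splitRows r w = r :: splitRows [] w := by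
  cases w with
  | nil => simp [splitRows, hr]
  | cons x w =>
    obtain ⟨hpos, hle⟩ := hw x rfl
    rw [splitRows, splitRows, if_neg hle.not_gt, if_pos (by simpa using hpos), List.nil_append]

theorem IsPacked.splitRows_flatten {a : List (List ℕ)} (h : IsPacked a) :
    splitRows [] a.flatten = a := by
  induction a with
  | nil => rfl
  | cons r t ih =>
    obtain ⟨hr, hhead, ht⟩ := isPacked_cons_iff.1 h
    have hfull : ∀ x ∈ t.flatten.head?, 0 < x ∧ x ≤ r.length := by
      cases t with
      | nil => simp
      | cons r' t =>
        have hr' : IsNonspecialRow r' := (isPacked_cons_iff.1 ht).1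
        obtain ⟨x, r', rfl⟩ := List.exists_cons_of_ne_nil hr'.1
        simpa using ⟨hr'.2 0 hr'.length_pos, hhead _ rfl⟩
    rw [List.flatten_cons, splitRows_append (cur := []) hr, List.nil_append,
      splitRows_eq_cons_of_full hr.1 hfull, ih ht]

/-- The number of rows of the greedy decomposition of a word appended to a row of `len` letters;
that row is counted when `len ≠ 0`. -/
def rowCount (len : ℕ) : List ℕ → ℕ
  | [] => if len = 0 then 0 else 1
  | x :: w => if len < x then rowCount (len + 1) w else rowCount 1 w + 1

theorem length_splitRows (cur w : List ℕ) :
    (splitRows cur w).length = rowCount cur.length w := by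
  induction w generalizing cur with
  | nil => by_cases h : cur = [] <;> simp [splitRows, rowCount, h]
  | cons x w ih => rw [splitRows, rowCount]; split_ifs <;> simp [ih]

theorem rowCount_eq_succ_of_full {len : ℕ} {w : List ℕ} (hlen : 0 < len)
    (hw : ∀ x ∈ w, 0 < x ∧ x ≤ len) : rowCount len w = rowCount 0 w + 1 := by
  cases w with
  | nil => simp [rowCount, hlen.ne']
  | cons x w =>
    obtain ⟨hpos, hle⟩ := hw x List.mem_cons_self
    rw [rowCount, rowCount, if_neg hle.not_gt, if_pos hpos]

theorem rowCount_replicate_append {len c m : ℕ} {w : List ℕ} (hlen : len ≤ m) (hc : c < m)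
    (hw : ∀ x ∈ w, 0 < x ∧ x ≤ m) : rowCount len (List.replicate c m ++ w) =
      if len + c < m then rowCount (len + c) w else rowCount (len + c - m) w + 1 := by
  induction c generalizing len with
  | zero =>
    obtain hlt | rfl := hlen.lt_or_eq
    · simp [hlt]
    · simpa using rowCount_eq_succ_of_full hc hw
  | succ c ih =>
    rw [List.replicate_succ, List.cons_append, rowCount]
    obtain hlt | rfl := hlen.lt_or_eq
    · rw [if_pos hlt, ih hlt (by omega), Nat.succ_add_eq_add_succ]
    · rw [if_neg (lt_irrefl _), ih (by omega) (by omega), if_pos (by omega), if_neg (by omega),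
        Nat.add_sub_cancel_left, add_comm 1 c]

/-- The inversion words with letters at most `n`, generated by choosing the multiplicity of the
largest letter. -/
def inversionWords : ℕ → Finset (List ℕ)
  | 0 => {[]}
  | n + 1 => (Finset.range (n + 1) ×ˢ inversionWords n).image
      fun p => List.replicate p.1 (n + 1) ++ p.2

theorem isInversionWord_replicate_append_iff {n c : ℕ} {w : List ℕ} (hw : ∀ x ∈ w, x ≤ n) :
    IsInversionWord (List.replicate c (n + 1) ++ w) ↔ c < n + 1 ∧ IsInversionWord w := by
  have hnot : n + 1 ∉ w := fun h => (hw _ h).not_gt n.lt_succ_self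
  have hcount : ∀ v ∈ w, (List.replicate c (n + 1) ++ w).count v = w.count v := fun v hv => by
    simp [List.count_append, List.count_replicate, (ne_of_mem_of_not_mem hv hnot).symm]
  have hcount_top : (List.replicate c (n + 1) ++ w).count (n + 1) = c := by
    simp [List.count_append, List.count_eq_zero_of_not_mem hnot]
  have htop : (∀ v ∈ List.replicate c (n + 1), (List.replicate c (n + 1) ++ w).count v < v) ↔
      c < n + 1 := by
    obtain rfl | hc := eq_or_ne c 0
    · simp
    · simp only [List.mem_replicate, hc, ne_eq, not_false_eq_true, true_and, forall_eq, hcount_top]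
  have hrest : (∀ v ∈ w, (List.replicate c (n + 1) ++ w).count v < v) ↔ ∀ v ∈ w, w.count v < v :=
    forall₂_congr fun v hv => by rw [hcount v hv]
  rw [IsInversionWord, IsInversionWord, List.forall_mem_append, htop, hrest,
    sortedGE_replicate_append_iff fun x hx => (hw x hx).trans n.le_succ, and_left_comm]

theorem mem_inversionWords_succ_iff {n : ℕ} {w : List ℕ} : w ∈ inversionWords (n + 1) ↔
    ∃ c < n + 1, ∃ w' ∈ inversionWords n, List.replicate c (n + 1) ++ w' = w := by
  simp only [inversionWords, Finset.mem_image, Finset.mem_product, Finset.mem_range, Prod.exists,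
    and_assoc, exists_and_left]

theorem mem_inversionWords_iff {n : ℕ} {w : List ℕ} :
    w ∈ inversionWords n ↔ IsInversionWord w ∧ ∀ x ∈ w, x ≤ n := by
  induction n generalizing w with
  | zero =>
    refine ⟨fun h => ?_, fun ⟨hw, hle⟩ => ?_⟩
    · obtain rfl : w = [] := by simpa [inversionWords] using h
      exact ⟨⟨List.Pairwise.nil.sortedGE, by simp⟩, by simp⟩
    · have hnil : w = [] := List.eq_nil_iff_forall_not_mem.2 fun x hx =>
        (hle x hx).not_gt (hw.pos x hx)
      simp [inversionWords, hnil]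
  | succ n ih =>
    rw [mem_inversionWords_succ_iff]
    constructor
    · rintro ⟨c, hc, w, hw, rfl⟩
      obtain ⟨hinv, hle⟩ := ih.1 hw
      refine ⟨(isInversionWord_replicate_append_iff hle).2 ⟨hc, hinv⟩,
        List.forall_mem_append.2 ⟨fun x hx => (List.eq_of_mem_replicate hx).le, fun x hx => ?_⟩⟩
      exact (hle x hx).trans n.le_succ
    · rintro ⟨hw, hle⟩
      have hsplit := eq_replicate_count_append_filter_ne hw.1 hle
      have hle' : ∀ x ∈ w.filter (· ≠ n + 1), x ≤ n := by
        intro x hx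
        obtain ⟨hxw, hne⟩ := List.mem_filter.1 hx
        exact Nat.le_of_lt_succ ((hle x hxw).lt_of_ne (of_decide_eq_true hne))
      rw [hsplit, isInversionWord_replicate_append_iff hle'] at hw
      exact ⟨_, hw.1, _, ih.2 ⟨hw.2, hle'⟩, hsplit.symm⟩

theorem sum_inversionWords_succ {M : Type*} [AddCommMonoid M] (n : ℕ) (f : List ℕ → M) :
    ∑ w ∈ inversionWords (n + 1), f w =
      ∑ c ∈ Finset.range (n + 1), ∑ w ∈ inversionWords n, f (List.replicate c (n + 1) ++ w) := by
  rw [inversionWords, Finset.sum_image, Finset.sum_product]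
  rintro ⟨c, w⟩ hcw ⟨c', w'⟩ hcw' heq
  simp only [Finset.coe_product, Set.mem_prod, Finset.mem_coe, mem_inversionWords_iff] at hcw hcw'
  have hnot : n + 1 ∉ w := fun h => (hcw.2.2 _ h).not_gt n.lt_succ_self
  have hnot' : n + 1 ∉ w' := fun h => (hcw'.2.2 _ h).not_gt n.lt_succ_self
  obtain rfl : c = c' := by
    simpa [List.count_append, List.count_eq_zero_of_not_mem, hnot, hnot']
      using congrArg (List.count (n + 1)) heq
  simpa using heq

section RowPolynomial

open Polynomial

/-- The generating polynomial, by number of rows, of the greedy decompositions of the inversion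
words with letters at most `n`, started in a row that already has `len` letters. -/
noncomputable def rowPolynomial (n len : ℕ) : ℤ[X] := ∑ w ∈ inversionWords n, X ^ rowCount len w

/- The length of the unfinished row after its `c` new letters `n + 1`, taken modulo `n + 1`, runs
through the residues with `c`, and it drops exactly when a row is completed. -/
theorem rowPolynomial_succ {n len : ℕ} (hlen : len ≤ n + 1) : rowPolynomial (n + 1) len =
    ∑ j ∈ Finset.range (n + 1), (if j < len then X else 1) * rowPolynomial n j := by
  simp only [rowPolynomial, sum_inversionWords_succ, Finset.mul_sum]
  refine Finset.sum_nbij' (fun c => if len + c < n + 1 then len + c else len + c - (n + 1))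
    (fun j => if j < len then j + (n + 1) - len else j - len) ?_ ?_ ?_ ?_ ?_
  any_goals
    intro c hc
    simp only [Finset.mem_range] at hc ⊢
    split_ifs <;> omega
  intro c hc
  rw [Finset.mem_range] at hc
  refine Finset.sum_congr rfl fun w hw => ?_
  obtain ⟨hinv, hle⟩ := mem_inversionWords_iff.1 hw
  rw [rowCount_replicate_append hlen hc fun x hx => ⟨hinv.pos x hx, (hle x hx).trans n.le_succ⟩]
  split_ifs
  · omega
  · rw [one_mul]
  · rw [pow_succ']
  · omega

theorem rowPolynomial_succ_self (n : ℕ) :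
    rowPolynomial (n + 1) (n + 1) = X * rowPolynomial (n + 1) 0 := by
  simp only [rowPolynomial_succ le_rfl, rowPolynomial_succ (Nat.zero_le (n + 1)), Finset.mul_sum,
    Nat.not_lt_zero, if_false, one_mul]
  exact Finset.sum_congr rfl fun j hj => by rw [if_pos (Finset.mem_range.1 hj)]

theorem rowPolynomial_succ_succ {n len : ℕ} (hlen : len ≤ n) :
    rowPolynomial (n + 1) (len + 1) =
      (n + 1 : ℤ[X]) * X * rowPolynomial n len +
        X * (1 - X) * derivative (rowPolynomial n len) := by
  induction n generalizing len with
  | zero =>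
    obtain rfl : len = 0 := by omega
    simp [rowPolynomial, inversionWords, rowCount]
  | succ n ih =>
    have hfirst : rowPolynomial (n + 1) 0 = ∑ j ∈ Finset.range (n + 1), rowPolynomial n j := by
      simp [rowPolynomial_succ]
    rw [rowPolynomial_succ (by omega), Finset.sum_range_succ', if_pos len.succ_pos, hfirst,
      rowPolynomial_succ hlen, derivative_sum]
    simp only [Finset.mul_sum, ← Finset.sum_add_distrib]
    refine Finset.sum_congr rfl fun j hj => ?_
    rw [ih (Nat.le_of_lt_succ (Finset.mem_range.1 hj))]
    simp only [Nat.succ_lt_succ_iff, Nat.cast_add, Nat.cast_one]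
    split_ifs
    · rw [derivative_mul, derivative_X]; ring
    · rw [one_mul, one_mul]; ring

theorem rowPolynomial_succ_zero (n : ℕ) : rowPolynomial (n + 1) 0 =
    (1 + (n : ℤ[X]) * X) * rowPolynomial n 0 + X * (1 - X) * derivative (rowPolynomial n 0) := by
  cases n with
  | zero => simp [rowPolynomial, inversionWords, rowCount]
  | succ n =>
    refine mul_left_cancel₀ X_ne_zero ?_
    rw [← rowPolynomial_succ_self, rowPolynomial_succ_succ le_rfl, rowPolynomial_succ_self,
      derivative_mul, derivative_X]
    push_cast
    ring

theorem eulerian_eq_zero_of_lt {n k : ℕ} (h : n < k) : Eulerian n k = 0 := by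
  induction n generalizing k with
  | zero =>
    obtain ⟨k, rfl⟩ := Nat.exists_eq_add_of_lt h
    simp [Eulerian]
  | succ n ih =>
    obtain ⟨k, rfl⟩ := Nat.exists_eq_succ_of_ne_zero (Nat.ne_zero_of_lt h)
    rw [Eulerian, ih (by omega), ih (by omega), mul_zero, mul_zero, add_zero]

theorem coeff_rowPolynomial_zero (n k : ℕ) : (rowPolynomial n 0).coeff k = Eulerian n k := by
  induction n generalizing k with
  | zero => cases k <;> simp [rowPolynomial, inversionWords, rowCount, Eulerian, coeff_one]
  | succ n ih =>
    have hexpand : rowPolynomial (n + 1) 0 = rowPolynomial n 0 +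
        X * (((n + 1 : ℕ) : ℤ[X]) * rowPolynomial n 0 + derivative (rowPolynomial n 0) -
          derivative (X * rowPolynomial n 0)) := by
      rw [rowPolynomial_succ_zero, derivative_mul, derivative_X]
      push_cast
      ring
    rw [hexpand]
    cases k with
    | zero => simp [ih, Eulerian]
    | succ k =>
      simp only [coeff_add, coeff_sub, coeff_X_mul, coeff_natCast_mul, coeff_derivative, ih,
        Eulerian]
      obtain hk | hk := le_or_gt k n
      · rw [Nat.add_sub_add_right]
        push_cast [Nat.cast_sub hk]
        ring
      · rw [eulerian_eq_zero_of_lt hk]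
        push_cast
        ring

theorem card_filter_rowCount_eq_eulerian (n k : ℕ) :
    {w ∈ inversionWords n | rowCount 0 w = k}.card = Eulerian n k := by
  have h := coeff_rowPolynomial_zero n k
  simp only [rowPolynomial, finsetSum_coeff, coeff_X_pow, Finset.sum_boole, eq_comm (a := k)] at h
  exact_mod_cast h

end RowPolynomial

theorem dppOrder_iff_forall_mem_flatten {a : List (List ℕ)} {n : ℕ} :
    DPPOrder a n ↔ ∀ x ∈ a.flatten, x ≤ n :=
  List.forall_mem_flatten.symm

theorem bijOn_flatten (n k : ℕ) :
    Set.BijOn List.flatten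
      {a : List (List ℕ) | IsDPP a ∧ DPPOrder a n ∧ a.length = k ∧ NoSpecialPart a}
      ({w ∈ inversionWords n | rowCount 0 w = k} : Finset (List ℕ)) := by
  have hflatten (w : List ℕ) : (splitRows [] w).flatten = w := flatten_splitRows [] w
  refine Set.InvOn.bijOn (f' := splitRows []) ⟨?_, fun w _ => hflatten w⟩ ?_ ?_
  · rintro a ⟨hdpp, -, -, hns⟩
    exact (isDPP_and_noSpecialPart_iff.1 ⟨hdpp, hns⟩).1.splitRows_flatten
  · rintro a ⟨hdpp, hle, rfl, hns⟩
    obtain ⟨hpacked, hinv⟩ := isDPP_and_noSpecialPart_iff.1 ⟨hdpp, hns⟩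
    have hlen := length_splitRows [] a.flatten
    rw [hpacked.splitRows_flatten] at hlen
    exact Finset.mem_filter.2
      ⟨mem_inversionWords_iff.2 ⟨hinv, dppOrder_iff_forall_mem_flatten.1 hle⟩, hlen.symm⟩
  · intro w hw
    obtain ⟨hw, hk⟩ := Finset.mem_filter.1 hw
    obtain ⟨hinv, hle⟩ := mem_inversionWords_iff.1 hw
    have hpacked : IsPacked (splitRows [] w) := isPacked_splitRows (by simp) hinv.pos
    obtain ⟨hdpp, hns⟩ := isDPP_and_noSpecialPart_iff.2 ⟨hpacked, by rwa [hflatten]⟩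
    exact ⟨hdpp, dppOrder_iff_forall_mem_flatten.2 (by rwa [hflatten]),
      (length_splitRows [] w).trans hk, hns⟩

/-- The number of descending plane partitions of order `n` with exactly `k` rows and no
special part is the Eulerian number `E(n,k)`. -/
theorem dpp_noSpecial_card_eq_eulerian (n k : ℕ) (hn : 1 ≤ n) (hk : k ≤ n - 1) :
    {a : List (List ℕ) | IsDPP a ∧ DPPOrder a n ∧ a.length = k ∧ NoSpecialPart a}.ncard =
      Eulerian n k := by
  rw [(bijOn_flatten n k).ncard_eq, Set.ncard_coe_finset, card_filter_rowCount_eq_eulerian]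
end

section
/- Let n ≥ 1 and let π be a permutation of {1,…,n} with exactly one ascent. Write π = βγ, where β and γ are the (unique, nonempty) decreasing blocks before and after the unique ascent, and γ = (γ_1,…,γ_m). Then the sequence a_k = γ_k + (k−1) for 1 ≤ k ≤ m is a one-row descending plane partition of order n with no special part: n ≥ a_1 ≥ a_2 ≥ … ≥ a_m ≥ 1, a_1 > m, and a_k ≥ k for all 1 ≤ k ≤ m. -/
/-- A one-row descending plane partition of order `n` with no special part:
a weakly decreasing list of integers in `{1,…,n}` whose first entry exceeds its length
and whose `k`-th entry (1-indexed) is at least `k`. -/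
def OneRowDPP (n : ℕ) (a : List ℕ) : Prop :=
  a.Chain' (· ≥ ·) ∧ (∀ x ∈ a, 1 ≤ x ∧ x ≤ n) ∧ a.length < a.getD 0 0 ∧
  ∀ p < a.length, p < a.getD p 0

/-!
Strict decrease makes `γ_k + (k - 1)` weakly decreasing, so all of its entries are at most
`γ_1 ≤ n`. The last letter `b` of `β` is a positive integer below `γ_1` that does not occur in `γ`,
so `γ` together with `b` gives `m + 1` distinct elements of `{1,…,γ_1}`, whence `m < γ_1`.
-/

theorem length_lt_length_of_nodup_of_subset_of_notMem {α : Type*} {l s : List α} {b : α}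
    (hl : l.Nodup) (hls : l ⊆ s) (hbs : b ∈ s) (hbl : b ∉ l) : l.length < s.length :=
  ((List.nodup_cons.2 ⟨hbl, hl⟩).subperm (List.cons_subset.2 ⟨hbs, hls⟩)).length_le

theorem getD_mem {α : Type*} {l : List α} {i : ℕ} (hi : i < l.length) (d : α) :
    l.getD i d ∈ l := by
  rw [List.getD_eq_getElem _ _ hi]
  exact List.getElem_mem hi

theorem le_getD_zero_of_isChain_ge {α : Type*} [Preorder α] {l : List α} {x : α}
    (hl : l.IsChain (· ≥ ·)) (hx : x ∈ l) (d : α) : x ≤ l.getD 0 d := by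
  cases l with
  | nil => exact absurd hx List.not_mem_nil
  | cons c t =>
    obtain rfl | hxt := List.mem_cons.1 hx
    · exact le_rfl
    · exact List.rel_of_pairwise_cons hl.pairwise hxt

theorem isChain_ge_mapIdx_add {l : List ℕ} (hl : l.IsChain (· > ·)) :
    (l.mapIdx fun i x => x + i).IsChain (· ≥ ·) := by
  rw [List.isChain_iff_getElem] at hl ⊢
  intro i hi
  have hstep := hl i (by simpa only [List.length_mapIdx] using hi)
  simp only [List.getElem_mapIdx]
  omega

theorem getD_zero_mapIdx_add (l : List ℕ) (d : ℕ) :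
    (l.mapIdx fun i x => x + i).getD 0 d = l.getD 0 d := by
  cases l <;> simp

theorem lt_getD_mapIdx_add {l : List ℕ} (hl : ∀ x ∈ l, 1 ≤ x) {p : ℕ} (hp : p < l.length)
    (d : ℕ) : p < (l.mapIdx fun i x => x + i).getD p d := by
  have hpos := hl l[p] (List.getElem_mem hp)
  rw [List.getD_eq_getElem _ _ (by simpa only [List.length_mapIdx] using hp), List.getElem_mapIdx]
  omega

theorem one_le_of_mem_mapIdx_add {l : List ℕ} (hl : ∀ x ∈ l, 1 ≤ x) {y : ℕ}
    (hy : y ∈ l.mapIdx fun i x => x + i) : 1 ≤ y := by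
  obtain ⟨i, hi, rfl⟩ := List.mem_mapIdx.1 hy
  exact le_add_right (hl l[i] (List.getElem_mem hi))

theorem mem_range'_one_iff {n x : ℕ} : x ∈ List.range' 1 n ↔ 1 ≤ x ∧ x ≤ n := by
  rw [List.mem_range'_1]
  omega

theorem length_lt_getD_zero_of_notMem {l : List ℕ} {b : ℕ} (hdec : l.IsChain (· > ·))
    (hpos : ∀ x ∈ l, 1 ≤ x) (hb : 1 ≤ b) (hbl : b ∉ l) (hlt : b < l.getD 0 0) :
    l.length < l.getD 0 0 := by
  have hweak : l.IsChain (· ≥ ·) := hdec.imp fun _ _ => le_of_lt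
  have hsub : l ⊆ List.range' 1 (l.getD 0 0) := fun x hx =>
    mem_range'_one_iff.2 ⟨hpos x hx, le_getD_zero_of_isChain_ge hweak hx 0⟩
  have hmem : b ∈ List.range' 1 (l.getD 0 0) := mem_range'_one_iff.2 ⟨hb, hlt.le⟩
  simpa only [List.length_range'] using
    length_lt_length_of_nodup_of_subset_of_notMem hdec.pairwise.nodup hsub hmem hbl

theorem exists_notMem_lt_of_append_perm_range' {n c : ℕ} {β γ : List ℕ} (hβne : β ≠ [])
    (hlast : β.getD (β.length - 1) 0 < c) (hperm : (β ++ γ).Perm (List.range' 1 n)) :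
    ∃ b, 1 ≤ b ∧ b ∉ γ ∧ b < c := by
  have hmem : β.getD (β.length - 1) 0 ∈ β :=
    getD_mem (Nat.sub_one_lt (List.length_pos_of_ne_nil hβne).ne') 0
  have hdisj : β.Disjoint γ :=
    List.disjoint_of_nodup_append (hperm.nodup_iff.2 List.nodup_range')
  have hrange := mem_range'_one_iff.1 (hperm.subset (List.mem_append_left γ hmem))
  exact ⟨_, hrange.1, hdisj hmem, hlast⟩

theorem perm_to_oneRowDPP_general {n : ℕ} {γ : List ℕ} (hγdec : γ.IsChain (· > ·))
    (hγmem : ∀ x ∈ γ, 1 ≤ x ∧ x ≤ n) (hgap : ∃ b, 1 ≤ b ∧ b ∉ γ ∧ b < γ.getD 0 0) :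
    OneRowDPP n (γ.mapIdx fun i x => x + i) := by
  obtain ⟨b, hb, hbγ, hlt⟩ := hgap
  have hγne : γ ≠ [] := by
    rintro rfl
    exact absurd hlt (Nat.not_lt_zero b)
  have hpos : ∀ x ∈ γ, 1 ≤ x := fun x hx => (hγmem x hx).1
  have hhead : γ.getD 0 0 ≤ n := (hγmem _ (getD_mem (List.length_pos_of_ne_nil hγne) 0)).2
  have hchain := isChain_ge_mapIdx_add hγdec
  refine ⟨hchain, fun y hy => ⟨one_le_of_mem_mapIdx_add hpos hy, ?_⟩, ?_, fun p hp => ?_⟩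
  · have hle := le_getD_zero_of_isChain_ge hchain hy 0
    rw [getD_zero_mapIdx_add] at hle
    exact hle.trans hhead
  · rw [List.length_mapIdx, getD_zero_mapIdx_add]
    exact length_lt_getD_zero_of_notMem hγdec hpos hb hbγ hlt
  · rw [List.length_mapIdx] at hp
    exact lt_getD_mapIdx_add hpos hp 0

/-- From a permutation of `{1,…,n}` with exactly one ascent, uniquely decomposed as
`β ++ γ` with `β`, `γ` nonempty strictly decreasing blocks and the last letter of `β`
smaller than the first letter of `γ`, the sequence `a_k = γ_k + (k-1)` is a one-row
descending plane partition of order `n` with no special part. -/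
theorem perm_to_oneRowDPP (n : ℕ) (hn : 1 ≤ n) (β γ : List ℕ)
    (hβne : β ≠ []) (hγne : γ ≠ [])
    (hβdec : β.Chain' (· > ·)) (hγdec : γ.Chain' (· > ·))
    (hjunction : β.getD (β.length - 1) 0 < γ.getD 0 0)
    (hperm : (β ++ γ).Perm (List.range' 1 n))
    (a : List ℕ) (ha : a = γ.mapIdx fun i x => x + i) :
    OneRowDPP n a :=
  ha ▸ perm_to_oneRowDPP_general hγdec
    (fun _ hx => mem_range'_one_iff.1 (hperm.subset (List.mem_append_right β hx)))
    (exists_notMem_lt_of_append_perm_range' hβne hjunction hperm)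
end

section
/- Let n ≥ 1 and let a = (a_1,…,a_m) be a one-row descending plane partition of order n with no special part. Let π = βγ be the corresponding permutation of {1,…,n} with one ascent, where γ_k = a_k − (k−1) for 1 ≤ k ≤ m and β lists the elements of {1,…,n} \ {γ_1,…,γ_m} in decreasing order. Then the non-inversion number of π satisfies I(π) = (Σ_{i=1}^m a_i) − m². -/
/-- The non-inversion number of a word `l`: the number of pairs `i < j` with `l_i < l_j`. -/
def noninv (l : List ℕ) : ℕ :=
  ((Finset.range l.length ×ˢ Finset.range l.length).filter
    fun p => p.1 < p.2 ∧ l.getD p.1 0 < l.getD p.2 0).card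

/-!
Both `β` and `γ` are decreasing, so the non-inversions of `βγ` are the pairs of a letter of `β`
and a larger letter of `γ`. Among the `γ_k - 1` letters of `{1,…,n}` below `γ_k`, exactly the
`m - k` letters that follow `γ_k` in `γ` do not belong to `β`. Hence `γ_k` is the larger letter
of `γ_k - 1 - (m - k) = a_k - m` non-inversions, and summing over `k` gives `Σ a_k - m²`.
-/

theorem countP_eq_sum_map_ite {α : Type*} (p : α → Prop) [DecidablePred p] (l : List α) :
    l.countP p = (l.map fun x => if p x then 1 else 0).sum := by
  induction l with
  | nil => simp
  | cons x l ih => simp [List.countP_cons, ih, add_comm]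

theorem countP_eq_sum_range_getD {α : Type*} (p : α → Prop) [DecidablePred p] (l : List α)
    (d : α) : l.countP p = ∑ j ∈ Finset.range l.length, if p (l.getD j d) then 1 else 0 := by
  rw [countP_eq_sum_map_ite, ← Fin.sum_univ_fun_getElem, Finset.sum_range]
  simp

theorem noninv_eq_sum (l : List ℕ) :
    noninv l = ∑ i ∈ Finset.range l.length, ∑ j ∈ Finset.range l.length,
      if i < j ∧ l.getD i 0 < l.getD j 0 then 1 else 0 := by
  rw [noninv, Finset.card_filter, Finset.sum_product]

theorem noninv_cons (x : ℕ) (l : List ℕ) :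
    noninv (x :: l) = l.countP (x < ·) + noninv l := by
  simp only [noninv_eq_sum, countP_eq_sum_range_getD _ l 0, List.length_cons,
    Finset.sum_range_succ', add_comm]
  simp

theorem noninv_append (l₁ l₂ : List ℕ) :
    noninv (l₁ ++ l₂) =
      noninv l₁ + noninv l₂ + (l₂.map fun c => l₁.countP (· < c)).sum := by
  induction l₁ with
  | nil => simp [noninv]
  | cons x l₁ ih =>
    have hcross : (l₂.map fun c => (x :: l₁).countP (· < c)).sum =
        (l₂.map fun c => l₁.countP (· < c)).sum + l₂.countP (x < ·) := by
      simp only [List.countP_cons, decide_eq_true_eq, List.sum_map_add,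
        countP_eq_sum_map_ite (x < ·)]
    rw [List.cons_append, noninv_cons, noninv_cons, List.countP_append, ih, hcross]
    ring

theorem noninv_eq_zero_of_sortedGE {l : List ℕ} (hl : l.SortedGE) : noninv l = 0 := by
  rw [noninv, Finset.card_eq_zero, Finset.filter_eq_empty_iff]
  rintro ⟨i, j⟩ hij ⟨hlt, hval⟩
  simp only [Finset.mem_product, Finset.mem_range] at hij
  rw [List.getD_eq_getElem _ _ hij.1, List.getD_eq_getElem _ _ hij.2] at hval
  exact hval.not_ge (hl.getElem_ge_getElem_of_le hlt.le)

theorem countP_lt_getElem_of_sortedGT {α : Type*} [LinearOrder α] {l : List α} (hl : l.SortedGT)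
    {k : ℕ} (hk : k < l.length) : l.countP (· < l[k]) + (k + 1) = l.length := by
  have htake : (l.take (k + 1)).countP (· < l[k]) = 0 := by
    simp only [List.countP_eq_zero, decide_eq_true_eq, not_lt]
    intro x hx
    obtain ⟨i, hi, rfl⟩ := List.mem_take_iff_getElem.1 hx
    exact hl.sortedGE.getElem_ge_getElem_of_le (by omega)
  have hdrop : (l.drop (k + 1)).countP (· < l[k]) = l.length - (k + 1) := by
    rw [← List.length_drop]
    simp only [List.countP_eq_length, decide_eq_true_eq]
    intro x hx
    obtain ⟨i, hi, rfl⟩ := List.mem_drop_iff_getElem.1 hx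
    exact hl.getElem_gt_getElem_of_lt (by omega)
  calc l.countP (· < l[k]) + (k + 1)
      = (l.take (k + 1) ++ l.drop (k + 1)).countP (· < l[k]) + (k + 1) := by
        rw [List.take_append_drop]
    _ = l.length := by rw [List.countP_append, htake, hdrop]; omega

theorem sortedGT_mapIdx_sub {a : List ℕ} (ha : a.SortedGE)
    (hle : ∀ k (hk : k < a.length), k ≤ a[k]) : (a.mapIdx fun k x => x - k).SortedGT := by
  refine List.sortedGT_iff_getElem_gt_getElem_of_lt.2 fun j i hj hi hij => ?_
  simp only [List.length_mapIdx] at hi hj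
  have hanti : a[j] ≤ a[i] := ha.getElem_ge_getElem_of_le hij.le
  have := hle j hj
  simp only [List.getElem_mapIdx]
  omega

theorem mapIdx_sub_mapIdx_add {a : List ℕ} (hle : ∀ k (hk : k < a.length), k ≤ a[k]) :
    ((a.mapIdx fun k x => x - k).mapIdx fun k x => x + k) = a :=
  List.ext_getElem (by simp) fun k _ hk => by simp [Nat.sub_add_cancel (hle k hk)]

section DescComplement

variable {α : Type*} [LinearOrder α] (s : Finset α) (γ : List α)

/-- The elements of `s` that do not occur in `γ`, listed in decreasing order: the word `β` of the
permutation `βγ`, for an arbitrary alphabet `s`. -/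
def descComplement : List α :=
  ((s.filter fun x => x ∉ γ).sort (· ≤ ·)).reverse

theorem sortedGT_descComplement : (descComplement s γ).SortedGT :=
  (Finset.sortedLT_sort _).reverse

variable {s γ}

theorem mem_descComplement {x : α} : x ∈ descComplement s γ ↔ x ∈ s ∧ x ∉ γ := by
  simp [descComplement]

theorem descComplement_append_perm (hγ : γ.Nodup) (hs : ∀ c ∈ γ, c ∈ s) :
    (descComplement s γ ++ γ).Perm s.toList := by
  have hnodup : (descComplement s γ ++ γ).Nodup :=
    List.nodup_append'.2 ⟨(sortedGT_descComplement s γ).nodup, hγ,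
      fun _ hx => (mem_descComplement.1 hx).2⟩
  refine (List.perm_ext_iff_of_nodup hnodup s.nodup_toList).2 fun x => ?_
  rw [List.mem_append, mem_descComplement, Finset.mem_toList]
  have := hs x
  tauto

end DescComplement

theorem countP_lt_toList_Icc {m n c : ℕ} (hc : c ≤ n + 1) :
    (Finset.Icc m n).toList.countP (· < c) = c - m := by
  have hfilter : (Finset.Icc m n).filter (· < c) = Finset.Ico m c := by grind
  rw [← Multiset.coe_countP, Finset.coe_toList, Multiset.countP_eq_card_filter,
    ← Finset.filter_val, hfilter, Finset.card_val, Nat.card_Ico]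

theorem countP_descComplement_lt_getElem {n : ℕ} {γ : List ℕ} (hγ : γ.SortedGT)
    (hmem : ∀ c ∈ γ, c ∈ Finset.Icc 1 n) {k : ℕ} (hk : k < γ.length) :
    (descComplement (Finset.Icc 1 n) γ).countP (· < γ[k]) + γ.length = γ[k] + k := by
  obtain ⟨hone, hle⟩ := Finset.mem_Icc.1 (hmem _ (List.getElem_mem hk))
  have htotal : (descComplement (Finset.Icc 1 n) γ).countP (· < γ[k]) + γ.countP (· < γ[k]) =
      γ[k] - 1 := by
    rw [← List.countP_append, (descComplement_append_perm hγ.nodup hmem).countP_eq,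
      countP_lt_toList_Icc (by omega)]
  have hlater := countP_lt_getElem_of_sortedGT hγ hk
  omega

theorem noninv_descComplement_append {n : ℕ} {γ : List ℕ} (hγ : γ.SortedGT)
    (hmem : ∀ c ∈ γ, c ∈ Finset.Icc 1 n) :
    noninv (descComplement (Finset.Icc 1 n) γ ++ γ) + γ.length ^ 2 =
      (γ.mapIdx fun k c => c + k).sum := by
  have hcount : (γ.map fun c => (descComplement (Finset.Icc 1 n) γ).countP (· < c) + γ.length) =
      γ.mapIdx fun k c => c + k :=
    List.ext_getElem (by simp) fun k _ hk => by
      simpa using countP_descComplement_lt_getElem hγ hmem (by simpa using hk)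
  rw [noninv_append, noninv_eq_zero_of_sortedGE (sortedGT_descComplement _ _).sortedGE,
    noninv_eq_zero_of_sortedGE hγ.sortedGE, ← hcount, List.sum_map_add]
  simp [sq]

/-- If a one-row DPP `a = (a_1,…,a_m)` of order `n` with no special part corresponds to the
permutation `π = β ++ γ` of `{1,…,n}` (where `γ_k = a_k - (k-1)` and `β` lists the
complement of `γ` in decreasing order), then `I(π) = Σ_{i=1}^m a_i − m²`. -/
theorem oneRowDPP_noninv (n : ℕ) (hn : 1 ≤ n) (a : List ℕ) (ha : OneRowDPP n a)
    (γ β : List ℕ)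
    (hγ : γ = a.mapIdx fun i x => x - i)
    (hβ : β = (((Finset.Icc 1 n).filter fun x => x ∉ γ).sort (· ≤ ·)).reverse) :
    noninv (β ++ γ) + a.length ^ 2 = a.sum := by
  obtain ⟨hchain, hbound, -, hgetD⟩ := ha
  have hpos : ∀ k (hk : k < a.length), k < a[k] := fun k hk => by simpa [hk] using hgetD k hk
  have hle : ∀ k (hk : k < a.length), k ≤ a[k] := fun k hk => (hpos k hk).le
  have hγ_desc : γ.SortedGT := hγ ▸ sortedGT_mapIdx_sub hchain.sortedGE hle
  have hγ_mem : ∀ c ∈ γ, c ∈ Finset.Icc 1 n := by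
    rw [hγ]
    intro c hc
    obtain ⟨k, hk, rfl⟩ := List.mem_mapIdx.1 hc
    have := hpos k hk
    have := hbound _ (List.getElem_mem hk)
    exact Finset.mem_Icc.2 (by omega)
  have hlength : γ.length = a.length := by rw [hγ, List.length_mapIdx]
  have hrecover : (γ.mapIdx fun k c => c + k) = a := hγ ▸ mapIdx_sub_mapIdx_add hle
  calc noninv (β ++ γ) + a.length ^ 2
      = noninv (descComplement (Finset.Icc 1 n) γ ++ γ) + γ.length ^ 2 := by
        rw [hβ, hlength, descComplement]
    _ = (γ.mapIdx fun k c => c + k).sum := noninv_descComplement_append hγ_desc hγ_mem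
    _ = a.sum := by rw [hrecover]
end

section
/- Let n ≥ 1 and let a = (a_1,…,a_m) be a one-row descending plane partition of order n with no special part, with corresponding permutation π = βγ of {1,…,n}, where β has length n−m. Then: β_{n−m} = 1 if and only if a_m > m; and for every p with 1 < p < n, β_{n−m} = p if and only if a_i = m for all i with m−p+1 < i ≤ m and a_{m−p+1} > m. -/
/-!
The last entry of `β` is the least positive integer missing from `γ`. Since `a` is weakly
decreasing with `a_k ≥ k`, the sequence `γ` is strictly decreasing and positive, so
`γ_k ≥ m - k + 1`; hence `1, …, p - 1` all occur in `γ` exactly when they are its last `p - 1`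
entries, i.e. when `a_i = m` for `i > m - p + 1`. In that case `p` is missing exactly when the
next entry `γ_{m-p+1}` exceeds its lower bound `p`, i.e. when `a_{m-p+1} > m`. The condition
`a_1 > m` rules out that `γ` is all of `{1, …, m}`.
-/

section

open Finset

theorem antitone_getD_bot {α : Type*} [Preorder α] [OrderBot α] {l : List α}
    (hl : l.Pairwise (· ≥ ·)) : Antitone (l.getD · ⊥) := by
  intro i j hij
  rcases lt_or_ge j l.length with hj | hj
  · simp only [List.getD_eq_getElem _ _ hj, List.getD_eq_getElem _ _ (hij.trans_lt hj)]
    exact hl.rel_get_of_le hij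
  · simp only [List.getD_eq_default _ _ hj, bot_le]

theorem mem_mapIdx_iff_mem_image_range {α β : Type*} [DecidableEq β] {f : ℕ → α → β}
    {l : List α} {b : β} (d : α) :
    b ∈ l.mapIdx f ↔ b ∈ (range l.length).image fun k => f k (l.getD k d) := by
  simp only [List.mem_mapIdx, mem_image, mem_range]
  refine exists_congr fun k => ⟨fun ⟨hk, h⟩ => ⟨hk, ?_⟩, fun ⟨hk, h⟩ => ⟨hk, ?_⟩⟩
  · rwa [List.getD_eq_getElem _ _ hk]
  · rwa [List.getD_eq_getElem _ _ hk] at h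

theorem getD_reverse_sort_eq_iff_isLeast {α : Type*} [LinearOrder α] {s : Finset α}
    (hs : s.Nonempty) (d x : α) :
    (s.sort (· ≤ ·)).reverse.getD ((s.sort (· ≤ ·)).reverse.length - 1) d = x ↔
      IsLeast (s : Set α) x := by
  have hcard := hs.card_pos
  have hmin : (s.sort (· ≤ ·)).reverse.getD ((s.sort (· ≤ ·)).reverse.length - 1) d =
      s.min' hs := by
    rw [min'_eq_sorted_zero, List.getD_eq_getElem _ _ (by simpa using hcard)]
    simp only [List.getElem_reverse, List.length_reverse, length_sort]
    congr 1
    omega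
  rw [hmin]
  exact ⟨fun h => h ▸ s.isLeast_min' hs, fun h => (s.isLeast_min' hs).unique h⟩

theorem isLeast_Icc_sdiff_iff {α : Type*} [LinearOrder α] [LocallyFiniteOrder α]
    {a b x : α} {t : Finset α} :
    IsLeast (↑(Icc a b \ t) : Set α) x ↔ x ∈ Icc a b ∧ x ∉ t ∧ Ico a x ⊆ t := by
  simp only [IsLeast, mem_lowerBounds, mem_coe, mem_sdiff, mem_Icc, subset_iff, mem_Ico]
  constructor
  · rintro ⟨⟨hx, hxt⟩, hle⟩
    refine ⟨hx, hxt, fun y hy => ?_⟩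
    by_contra hyt
    exact hy.2.not_ge (hle y ⟨⟨hy.1, hy.2.le.trans hx.2⟩, hyt⟩)
  · rintro ⟨hx, hxt, hsub⟩
    refine ⟨⟨hx, hxt⟩, fun y hy => ?_⟩
    by_contra! hyx
    exact hy.2 (hsub ⟨hy.1.1, hyx⟩)

section StrictAntiOn

variable {g : ℕ → ℕ} {m : ℕ}

theorem sub_le_of_strictAntiOn (hg : StrictAntiOn g (Set.Iio m)) (hpos : ∀ k < m, 0 < g k)
    {k : ℕ} (hk : k < m) : m - k ≤ g k := by
  induction hd : m - k generalizing k with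
  | zero => exact Nat.zero_le _
  | succ d ih =>
    rcases Nat.eq_zero_or_pos d with rfl | hd_pos
    · exact hpos k hk
    · have hk' : k + 1 < m := by omega
      exact (ih hk' (by omega)).trans_lt (hg hk hk' k.lt_succ_self)

theorem Ico_one_subset_image_iff (hg : StrictAntiOn g (Set.Iio m))
    (hpos : ∀ k < m, 0 < g k) {p : ℕ} :
    Ico 1 p ⊆ (range m).image g ↔ p ≤ m + 1 ∧ ∀ k < m, m < k + p → g k = m - k := by
  constructor
  · induction p with
    | zero => exact fun _ => ⟨Nat.zero_le _, fun k hk hmk => by omega⟩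
    | succ p ih =>
      intro hsub
      obtain ⟨-, htail⟩ := ih ((Ico_subset_Ico_right p.le_succ).trans hsub)
      rcases Nat.eq_zero_or_pos p with rfl | hp
      · exact ⟨by omega, fun k hk hmk => by omega⟩
      obtain ⟨k, hk, hkp⟩ := mem_image.1 (hsub (mem_Ico.2 ⟨hp, p.lt_succ_self⟩))
      rw [mem_range] at hk
      have hlower : m - k ≤ g k := sub_le_of_strictAntiOn hg hpos hk
      have hk_eq : k + p = m := by
        by_contra hne
        have := htail k hk (by omega)
        omega
      refine ⟨by omega, fun j hj hmj => ?_⟩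
      rcases eq_or_ne j k with rfl | hjk
      · omega
      · exact htail j hj (by omega)
  · rintro ⟨hpm, htail⟩ q hq
    rw [mem_Ico] at hq
    have hqm : m - q < m := by omega
    exact mem_image.2 ⟨m - q, mem_range.2 hqm, by rw [htail _ hqm (by omega)]; omega⟩

theorem notMem_image_iff_lt (hg : StrictAntiOn g (Set.Iio m)) (hpos : ∀ k < m, 0 < g k)
    {p : ℕ} (hp : 0 < p) (hpm : p ≤ m) (htail : ∀ k < m, m < k + p → g k = m - k) :
    p ∉ (range m).image g ↔ p < g (m - p) := by
  have hmp : m - p < m := by omega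
  constructor
  · intro hmem
    have hlower : m - (m - p) ≤ g (m - p) := sub_le_of_strictAntiOn hg hpos hmp
    have hne : g (m - p) ≠ p := fun h => hmem (mem_image.2 ⟨_, mem_range.2 hmp, h⟩)
    omega
  · intro hlt hmem
    obtain ⟨k, hk, hkp⟩ := mem_image.1 hmem
    rw [mem_range] at hk
    rcases lt_or_ge m (k + p) with hmk | hmk
    · have := htail k hk hmk
      omega
    · have := hg.antitoneOn hk hmp (show k ≤ m - p by omega)
      omega

theorem isLeast_Icc_one_sdiff_image_iff (hg : StrictAntiOn g (Set.Iio m))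
    (hpos : ∀ k < m, 0 < g k) {n p : ℕ} (hmn : m ≤ n) (hp : 0 < p) (hpm : p ≤ m) :
    IsLeast (↑(Icc 1 n \ (range m).image g) : Set ℕ) p ↔
      (∀ k < m, m < k + p → g k = m - k) ∧ p < g (m - p) := by
  have hpn : p ∈ Icc 1 n := mem_Icc.2 ⟨hp, hpm.trans hmn⟩
  rw [isLeast_Icc_sdiff_iff, Ico_one_subset_image_iff hg hpos]
  constructor
  · rintro ⟨-, hmem, -, htail⟩
    exact ⟨htail, (notMem_image_iff_lt hg hpos hp hpm htail).1 hmem⟩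
  · rintro ⟨htail, hlt⟩
    exact ⟨hpn, (notMem_image_iff_lt hg hpos hp hpm htail).2 hlt, by omega, htail⟩

theorem le_of_isLeast_Icc_one_sdiff_image (hg : StrictAntiOn g (Set.Iio m))
    (hpos : ∀ k < m, 0 < g k) {n p : ℕ} (hm : 0 < m) (h0 : g 0 ≠ m)
    (h : IsLeast (↑(Icc 1 n \ (range m).image g) : Set ℕ) p) : p ≤ m := by
  obtain ⟨-, -, hsub⟩ := isLeast_Icc_sdiff_iff.1 h
  obtain ⟨-, htail⟩ := (Ico_one_subset_image_iff hg hpos).1 hsub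
  by_contra! hmp
  exact h0 (htail 0 hm (by omega))

end StrictAntiOn

namespace OneRowDPP

/-- The entry `γ_{k+1} = a_{k+1} - k` of the decreasing sequence `γ` attached to
`a = (a_1, …, a_m)`, indexed from `k = 0`; meaningful for `k < m`. -/
def gammaEntry (a : List ℕ) (k : ℕ) : ℕ := a.getD k 0 - k

variable {n : ℕ} {a : List ℕ}

theorem antitone_getD (ha : OneRowDPP n a) : Antitone (a.getD · 0) :=
  antitone_getD_bot (List.isChain_iff_pairwise.1 ha.1)

theorem length_lt_getD_zero (ha : OneRowDPP n a) : a.length < a.getD 0 0 :=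
  ha.2.2.1

theorem lt_getD (ha : OneRowDPP n a) {k : ℕ} (hk : k < a.length) : k < a.getD k 0 :=
  ha.2.2.2 k hk

theorem length_pos (ha : OneRowDPP n a) : 0 < a.length := by
  by_contra! h
  have hlt := ha.length_lt_getD_zero
  rw [List.getD_eq_default _ _ (by omega)] at hlt
  omega

theorem getD_le (ha : OneRowDPP n a) (k : ℕ) : a.getD k 0 ≤ n := by
  rcases lt_or_ge k a.length with hk | hk
  · rw [List.getD_eq_getElem _ _ hk]
    exact (ha.2.1 _ (List.getElem_mem hk)).2
  · rw [List.getD_eq_default _ _ hk]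
    exact n.zero_le

theorem length_lt (ha : OneRowDPP n a) : a.length < n :=
  ha.length_lt_getD_zero.trans_le (ha.getD_le 0)

theorem gammaEntry_pos (ha : OneRowDPP n a) : ∀ k < a.length, 0 < gammaEntry a k :=
  fun _ hk => Nat.sub_pos_of_lt (ha.lt_getD hk)

theorem strictAntiOn_gammaEntry (ha : OneRowDPP n a) :
    StrictAntiOn (gammaEntry a) (Set.Iio a.length) := by
  intro i _ j hj hij
  have hle : a.getD j 0 ≤ a.getD i 0 := ha.antitone_getD hij.le
  have hlt := ha.lt_getD hj
  simp only [gammaEntry]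
  omega

theorem image_gammaEntry_subset (ha : OneRowDPP n a) :
    (range a.length).image (gammaEntry a) ⊆ Icc 1 n := by
  refine image_subset_iff.2 fun k hk => mem_Icc.2 ⟨?_, ?_⟩
  · exact ha.gammaEntry_pos k (mem_range.1 hk)
  · exact (Nat.sub_le _ _).trans (ha.getD_le k)

theorem card_Icc_sdiff_image_gammaEntry (ha : OneRowDPP n a) :
    (Icc 1 n \ (range a.length).image (gammaEntry a)).card = n - a.length := by
  have hinj : Set.InjOn (gammaEntry a) (range a.length) := by
    simpa only [coe_range] using ha.strictAntiOn_gammaEntry.injOn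
  rw [card_sdiff_of_subset ha.image_gammaEntry_subset, card_image_of_injOn hinj, card_range,
    Nat.card_Icc, Nat.add_sub_cancel]

theorem gammaEntry_eq_iff (ha : OneRowDPP n a) {k : ℕ} (hk : k < a.length) :
    gammaEntry a k = a.length - k ↔ a.getD k 0 = a.length := by
  have hlt := ha.lt_getD hk
  simp only [gammaEntry]
  omega

theorem isLeast_Icc_sdiff_image_gammaEntry_iff (ha : OneRowDPP n a) {p : ℕ}
    (hp : 0 < p) :
    IsLeast (↑(Icc 1 n \ (range a.length).image (gammaEntry a)) : Set ℕ) p ↔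
      (∀ i, a.length + 1 < i + p → i ≤ a.length → a.getD (i - 1) 0 = a.length) ∧
        a.length < a.getD (a.length - p) 0 := by
  have hm := ha.length_pos
  have hfirst := ha.length_lt_getD_zero
  rcases lt_or_ge a.length p with hmp | hpm
  · refine iff_of_false (fun h => hmp.not_ge ?_) fun h => hfirst.ne' (h.1 1 (by omega) hm)
    exact le_of_isLeast_Icc_one_sdiff_image ha.strictAntiOn_gammaEntry ha.gammaEntry_pos hm
      hfirst.ne' h
  · rw [isLeast_Icc_one_sdiff_image_iff ha.strictAntiOn_gammaEntry ha.gammaEntry_pos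
      ha.length_lt.le hp hpm]
    refine and_congr ⟨fun h i hi him => ?_, fun h k hk hmk => ?_⟩ ?_
    · exact (ha.gammaEntry_eq_iff (by omega)).1 (h (i - 1) (by omega) (by omega))
    · exact (ha.gammaEntry_eq_iff hk).2 (h (k + 1) (by omega) hk)
    · simp only [gammaEntry]
      omega

end OneRowDPP

end

/-- For a one-row DPP `a = (a_1,…,a_m)` of order `n` with no special part and the associated
permutation `β ++ γ` of `{1,…,n}` (with `γ_k = a_k - (k-1)` and `β` the decreasing listing of
the complement, of length `n - m`): the last entry `β_{n-m}` of `β` equals `1` iff `a_m > m`;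
and for `1 < p < n`, `β_{n-m} = p` iff `a_i = m` for all `m - p + 1 < i ≤ m` and
`a_{m-p+1} > m` (the inequality `i > m - p + 1` is written additively as `m + 1 < i + p`). -/
theorem oneRowDPP_last_of_beta (n : ℕ) (hn : 1 ≤ n) (a : List ℕ) (ha : OneRowDPP n a)
    (γ β : List ℕ)
    (hγ : γ = a.mapIdx fun i x => x - i)
    (hβ : β = (((Finset.Icc 1 n).filter fun x => x ∉ γ).sort (· ≤ ·)).reverse) :
    β.length = n - a.length ∧
    (β.getD (β.length - 1) 0 = 1 ↔ a.length < a.getD (a.length - 1) 0) ∧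
    (∀ p, 1 < p → p < n →
      (β.getD (β.length - 1) 0 = p ↔
        (∀ i, a.length + 1 < i + p → i ≤ a.length → a.getD (i - 1) 0 = a.length) ∧
          a.length < a.getD (a.length - p) 0)) := by
  have hcompl : (Finset.Icc 1 n).filter (fun x => x ∉ γ) =
      Finset.Icc 1 n \ (Finset.range a.length).image (OneRowDPP.gammaEntry a) := by
    ext x
    rw [Finset.mem_filter, Finset.mem_sdiff, hγ, mem_mapIdx_iff_mem_image_range 0]
    rfl
  have hcard := ha.card_Icc_sdiff_image_gammaEntry
  have hne := Finset.card_pos.1 (hcard ▸ Nat.sub_pos_of_lt ha.length_lt)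
  rw [hcompl] at hβ
  have hlast (p : ℕ) : β.getD (β.length - 1) 0 = p ↔ IsLeast _ p :=
    hβ ▸ getD_reverse_sort_eq_iff_isLeast hne 0 p
  refine ⟨by rw [hβ, List.length_reverse, Finset.length_sort, hcard], ?_, fun p hp _ => ?_⟩
  · rw [hlast, ha.isLeast_Icc_sdiff_image_gammaEntry_iff one_pos]
    exact and_iff_right fun i hi him => by omega
  · rw [hlast, ha.isLeast_Icc_sdiff_image_gammaEntry_iff (zero_lt_one.trans hp)]
end
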